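/- Any two proper gradient maps f, g : ℝ² → ℝ² with Brouwer degree deg f = deg g = 0 are proper gradient homotopic; that is, the set of proper gradient homotopy classes of proper gradient maps of degree 0 on ℝ² is a singleton. -/

import Mathlib

open Set Metric Filter

noncomputable section

/-- Euclidean space `ℝⁿ`. -/
abbrev Euc (n : ℕ) := EuclideanSpace ℝ (Fin n)

/-- A map `f : ℝⁿ → ℝⁿ` is gradient if it is the gradient of a `C¹` function `φ : ℝⁿ → ℝ`. -/
def IsGradient {n : ℕ} (f : Euc n → Euc n) : Prop :=
  ∃ φ : Euc n → ℝ, ContDiff ℝ 1 φ ∧ ∀ x, gradient φ x = f x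

/-- A map is proper if preimages of compact sets are compact (our maps are continuous anyway). -/
def IsProper {n : ℕ} (f : Euc n → Euc n) : Prop :=
  ∀ K : Set (Euc n), IsCompact K → IsCompact (f ⁻¹' K)

/-- `h : [0,1] × ℝⁿ → ℝⁿ` is a gradient homotopy: it is continuous, each `h t` is a
gradient map, and the zero set `h⁻¹(0)` (within `[0,1] × ℝⁿ`) is compact. -/
def IsGradientHomotopy {n : ℕ} (h : ℝ → Euc n → Euc n) : Prop :=
  ContinuousOn (fun p : ℝ × Euc n => h p.1 p.2) (Icc 0 1 ×ˢ univ) ∧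
  (∀ t ∈ Icc (0:ℝ) 1, IsGradient (h t)) ∧
  IsCompact {p : ℝ × Euc n | p.1 ∈ Icc (0:ℝ) 1 ∧ h p.1 p.2 = 0}

/-- Two maps are gradient homotopic if some gradient homotopy connects them. -/
def GradientHomotopic {n : ℕ} (f g : Euc n → Euc n) : Prop :=
  ∃ h : ℝ → Euc n → Euc n, IsGradientHomotopy h ∧ h 0 = f ∧ h 1 = g

/-- `h : [0,1] × ℝⁿ → ℝⁿ` is a proper gradient homotopy: it is continuous, each `h t` is a
gradient map, and `h` is proper as a map on `[0,1] × ℝⁿ`. -/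
def IsProperGradientHomotopy {n : ℕ} (h : ℝ → Euc n → Euc n) : Prop :=
  ContinuousOn (fun p : ℝ × Euc n => h p.1 p.2) (Icc 0 1 ×ˢ univ) ∧
  (∀ t ∈ Icc (0:ℝ) 1, IsGradient (h t)) ∧
  (∀ K : Set (Euc n), IsCompact K →
    IsCompact {p : ℝ × Euc n | p.1 ∈ Icc (0:ℝ) 1 ∧ h p.1 p.2 ∈ K})

/-- Two maps are proper gradient homotopic if some proper gradient homotopy connects them. -/
def ProperGradientHomotopic {n : ℕ} (f g : Euc n → Euc n) : Prop :=
  ∃ h : ℝ → Euc n → Euc n, IsProperGradientHomotopy h ∧ h 0 = f ∧ h 1 = g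
/-- A Brouwer degree theory on `ℝⁿ`: an integer-valued function `deg f Ω`, defined for
continuous maps nonvanishing on `∂Ω`, satisfying the classical axioms of normalization,
additivity and homotopy invariance, which determine it uniquely. -/
structure DegreeTheory (n : ℕ) where
  deg : (Euc n → Euc n) → Set (Euc n) → ℤ
  normalized : ∀ Ω : Set (Euc n), IsOpen Ω → Bornology.IsBounded Ω → (0 : Euc n) ∈ Ω →
    deg id Ω = 1
  additive : ∀ (f : Euc n → Euc n) (Ω Ω₁ Ω₂ : Set (Euc n)),
    IsOpen Ω → Bornology.IsBounded Ω → IsOpen Ω₁ → IsOpen Ω₂ →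
    Ω₁ ⊆ Ω → Ω₂ ⊆ Ω → Disjoint Ω₁ Ω₂ →
    ContinuousOn f (closure Ω) →
    (∀ x ∈ closure Ω \ (Ω₁ ∪ Ω₂), f x ≠ 0) →
    deg f Ω = deg f Ω₁ + deg f Ω₂
  homotopyInv : ∀ (h : ℝ → Euc n → Euc n) (Ω : Set (Euc n)),
    IsOpen Ω → Bornology.IsBounded Ω →
    ContinuousOn (fun p : ℝ × Euc n => h p.1 p.2) (Icc 0 1 ×ˢ closure Ω) →
    (∀ t ∈ Icc (0:ℝ) 1, ∀ x ∈ frontier Ω, h t x ≠ 0) →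
    deg (h 0) Ω = deg (h 1) Ω

/-- `f` has Brouwer degree `k`: `deg f` computed on any ball containing `f⁻¹(0)` equals `k`. -/
def HasDeg {n : ℕ} (D : DegreeTheory n) (f : Euc n → Euc n) (k : ℤ) : Prop :=
  ∀ R : ℝ, 0 < R → f ⁻¹' {0} ⊆ ball 0 R → D.deg f (ball 0 R) = k

/-!
Let `f = ∇φ` be proper of degree `0` on the plane. Near infinity `f / ‖f‖` has winding number `0`,
so there is a `C¹` unit field `Z = exp (i α)` on the whole plane with `⟪f, Z⟫ ≥ ‖f‖ / 2` near
infinity. A nowhere vanishing bounded planar field has no recurrence, so `φ` grows at least linearly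
along every integral curve of `Z`; averaging `φ` along the flow and rescaling `Z` gives a function
`τ` with derivative `1` along `Z`, and from it potentials `G t` whose derivative at `x` in the
direction `Z (t x)` is `1 + ‖x‖²`. The segment from `f` to `∇(G 1)`, followed by the dilation
`t : 1 → 0`, is a proper gradient homotopy to a gradient that is coercive in the constant direction
`Z 0`, and any two such gradients are joined by a segment.
-/

open scoped Topology NNReal Manifold

/-! ### Integral curves and flows of `C¹` vector fields -/

section Flow

variable {V : Type*} [NormedAddCommGroup V] [NormedSpace ℝ V]

theorem isIntegralCurve_const_iff_isMIntegralCurve {Z : V → V} {γ : ℝ → V} :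
    IsIntegralCurve γ (fun _ => Z) ↔ IsMIntegralCurve (I := 𝓘(ℝ, V)) γ Z :=
  forall_congr' fun _ => hasMFDerivAt_iff_hasFDerivAt.symm

theorem eq_of_isIntegralCurve_const [CompleteSpace V] {Z : V → V} (hZ : ContDiff ℝ 1 Z)
    {γ γ' : ℝ → V} (hγ : IsIntegralCurve γ fun _ => Z) (hγ' : IsIntegralCurve γ' fun _ => Z)
    {t₀ : ℝ} (h : γ t₀ = γ' t₀) : γ = γ' :=
  isMIntegralCurve_Ioo_eq_of_contMDiff_boundaryless (I := 𝓘(ℝ, V))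
    (contMDiff_vectorSpace_iff_contDiff.2 hZ)
    (isIntegralCurve_const_iff_isMIntegralCurve.1 hγ)
    (isIntegralCurve_const_iff_isMIntegralCurve.1 hγ') h

theorem flow_add [CompleteSpace V] {Z : V → V} (hZ : ContDiff ℝ 1 Z) {Φ : V → ℝ → V}
    (hΦ₀ : ∀ x, Φ x 0 = x) (hΦ : ∀ x, IsIntegralCurve (Φ x) fun _ => Z) (x : V) (s t : ℝ) :
    Φ x (s + t) = Φ (Φ x s) t := by
  have h := eq_of_isIntegralCurve_const hZ ((hΦ x).comp_add s) (hΦ (Φ x s)) (t₀ := 0)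
    (by simp [hΦ₀])
  simpa [add_comm] using congrFun h t

theorem eqOn_Icc_of_isIntegralCurve_const [ProperSpace V] {Z Z' : V → V} (hZ' : ContDiff ℝ 1 Z')
    {γ γ' : ℝ → V} (hγ : IsIntegralCurve γ fun _ => Z) (hγ' : IsIntegralCurve γ' fun _ => Z')
    {a b : ℝ} (ha : γ a = γ' a) (h : ∀ t ∈ Ico a b, Z (γ t) = Z' (γ t)) :
    EqOn γ γ' (Icc a b) := by
  obtain ⟨R, hR⟩ := ((isCompact_Icc.image hγ.continuous).union
    ((isCompact_Icc (a := a) (b := b)).image hγ'.continuous)).isBounded.subset_closedBall 0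
  obtain ⟨K, hK⟩ := hZ'.contDiffOn.exists_lipschitzOnWith one_ne_zero
    (convex_closedBall 0 R) (isCompact_closedBall 0 R)
  refine ODE_solution_unique_of_mem_Icc_right (v := fun _ => Z') (fun _ _ => hK)
    hγ.continuous.continuousOn (fun t ht => h t ht ▸ (hγ t).hasDerivWithinAt)
    (fun t ht => hR (.inl (mem_image_of_mem _ (Ico_subset_Icc_self ht))))
    hγ'.continuous.continuousOn (fun t _ => (hγ' t).hasDerivWithinAt)
    (fun t ht => hR (.inr (mem_image_of_mem _ (Ico_subset_Icc_self ht)))) ha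

theorem exists_isIntegralCurve_const [ProperSpace V] {Z : V → V} (hZ : ContDiff ℝ 1 Z) {M : ℝ≥0}
    (hM : ∀ x, ‖Z x‖ ≤ M) (x : V) : ∃ γ : ℝ → V, γ 0 = x ∧ IsIntegralCurve γ fun _ => Z := by
  simp only [isIntegralCurve_const_iff_isMIntegralCurve]
  refine exists_isMIntegralCurve_of_isMIntegralCurveOn (contMDiff_vectorSpace_iff_contDiff.2 hZ)
    one_pos (fun y => ?_) x
  obtain ⟨K, hK⟩ := hZ.contDiffOn.exists_lipschitzOnWith one_ne_zero
    (convex_closedBall y M) (isCompact_closedBall y M)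
  have hPL : IsPicardLindelof (fun _ => Z) (tmin := -1) (tmax := 1) ⟨0, by simp⟩ y M 0 M K :=
    .of_time_independent (fun z _ => hM z) hK (by simp)
  obtain ⟨γ, hγ₀, hγ⟩ := hPL.exists_eq_forall_mem_Icc_hasDerivWithinAt₀
  exact ⟨γ, hγ₀, fun t ht =>
    ((hγ t (Ioo_subset_Icc_self ht)).mono Ioo_subset_Icc_self).hasFDerivWithinAt.hasMFDerivWithinAt⟩

theorem contDiff_one_of_hasStrictFDerivAt {W : Type*} [NormedAddCommGroup W] [NormedSpace ℝ W]
    {f : V → W} {f' : V → V →L[ℝ] W} (hf : ∀ x, HasStrictFDerivAt f (f' x) x) :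
    ContDiff ℝ 1 f := by
  refine contDiff_one_iff_hasFDerivAt.2 ⟨f', ?_, fun x => (hf x).hasFDerivAt⟩
  refine Metric.continuous_iff'.2 fun x ε hε => ?_
  have h_near := (nhds_prod_eq (x := x) (y := x) ▸
    eventually_eventually_nhds.2 ((hf x).isLittleO.def (half_pos hε))).diag_of_prod
  filter_upwards [h_near] with y hy
  have h_slice : ∀ᶠ z in 𝓝 y, ‖(f z - f' x z) - (f y - f' x y)‖ ≤ ε / 2 * ‖z - y‖ := by
    filter_upwards [(Continuous.prodMk_left y).tendsto y |>.eventually hy] with z hz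
    rw [sub_sub_sub_comm, ← map_sub]
    exact hz
  have h_deriv : HasFDerivAt (fun z => f z - f' x z) (f' y - f' x) y :=
    (hf y).hasFDerivAt.sub (f' x).hasFDerivAt
  rw [dist_eq_norm]
  linarith [h_deriv.le_of_lip' (half_pos hε).le h_slice]

theorem exists_forall_dist_lt_of_isCompact {X Y : Type*} [PseudoMetricSpace X]
    [PseudoMetricSpace Y] {K : Set X} (hK : IsCompact K) {F : X → Y} (hF : Continuous F) {ε : ℝ}
    (hε : 0 < ε) : ∃ δ > 0, ∀ a ∈ K, ∀ w, dist w a < δ → dist (F w) (F a) < ε := by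
  obtain ⟨δ, hδ, h⟩ := Metric.mem_uniformity_dist.1 <|
    hK.uniformContinuousAt_of_continuousAt F (fun _ _ => hF.continuousAt)
      (Metric.dist_mem_uniformity hε)
  refine ⟨δ, hδ, fun a ha w hw => ?_⟩
  rw [dist_comm] at hw ⊢
  exact h hw ha

theorem exists_linear_ode_solution [CompleteSpace V] {A : ℝ → V →L[ℝ] V} (hA : Continuous A)
    (hA_le : ∀ s, ‖A s‖ ≤ 1 / 2) :
    ∃ W : ℝ → V →L[ℝ] V, W 0 = .id ℝ V ∧
      ∀ t ∈ Icc (0 : ℝ) 1, HasDerivWithinAt W ((A t).comp (W t)) (Icc 0 1) t := by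
  have h_norm : ∀ B ∈ closedBall (ContinuousLinearMap.id ℝ V) 1, ‖B‖ ≤ 2 := fun B hB => by
    have h := norm_le_norm_add_norm_sub (.id ℝ V) B
    rw [norm_sub_rev] at h
    linarith [mem_closedBall_iff_norm.1 hB, ContinuousLinearMap.norm_id_le (𝕜 := ℝ) (E := V)]
  have hPL : IsPicardLindelof (fun s (B : V →L[ℝ] V) => (A s).comp B) (tmin := 0) (tmax := 1)
      ⟨0, by simp⟩ (.id ℝ V) 1 0 1 (1 / 2) := by
    refine ⟨fun t _ => .of_dist_le_mul fun B _ C _ => ?_,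
      fun B _ => (hA.clm_comp continuous_const).continuousOn, fun t _ B hB => ?_, by simp⟩
    · rw [dist_eq_norm, dist_eq_norm, ← ContinuousLinearMap.comp_sub]
      exact (ContinuousLinearMap.opNorm_comp_le _ _).trans 
        (mul_le_mul_of_nonneg_right ((hA_le t).trans_eq (by norm_num)) (norm_nonneg _))
    · calc ‖(A t).comp B‖ ≤ ‖A t‖ * ‖B‖ := ContinuousLinearMap.opNorm_comp_le _ _
        _ ≤ 1 / 2 * 2 := by gcongr; exacts [hA_le t, h_norm B hB]
        _ = (1 : ℝ≥0) := by norm_num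
  exact hPL.exists_eq_forall_mem_Icc_hasDerivWithinAt₀

theorem exp_half_le_two : Real.exp (1 / 2) ≤ 2 :=
  (Real.exp_bound_div_one_sub_of_interval (by norm_num) (by norm_num)).trans (by norm_num)

theorem dist_le_two_mul_of_isIntegralCurve {Z : V → V} (hZ : LipschitzWith (1 / 2) Z)
    {α β : ℝ → V} (hα : IsIntegralCurve α fun _ => Z) (hβ : IsIntegralCurve β fun _ => Z) {t : ℝ}
    (ht : t ∈ Icc (0 : ℝ) 1) : dist (α t) (β t) ≤ 2 * dist (α 0) (β 0) := by
  calc dist (α t) (β t) ≤ dist (α 0) (β 0) * Real.exp ((1 / 2 : ℝ≥0) * (t - 0)) :=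
        dist_le_of_trajectories_ODE (v := fun _ => Z) (fun _ => hZ)
          hα.continuous.continuousOn (fun s _ => (hα s).hasDerivWithinAt)
          hβ.continuous.continuousOn (fun s _ => (hβ s).hasDerivWithinAt) le_rfl t ht
    _ ≤ dist (α 0) (β 0) * Real.exp (1 / 2) := by
        gcongr
        simpa using ht.2
    _ ≤ 2 * dist (α 0) (β 0) := by
        rw [mul_comm]
        gcongr
        exact exp_half_le_two

theorem norm_sub_variation_le {Z : V → V} (hZ : Differentiable ℝ Z)
    (hLip : LipschitzWith (1 / 2) Z) {α β γ : ℝ → V} (hα : IsIntegralCurve α fun _ => Z)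
    (hβ : IsIntegralCurve β fun _ => Z) {W : ℝ → V →L[ℝ] V} (hW₀ : W 0 = .id ℝ V)
    (hW : ∀ t ∈ Icc (0 : ℝ) 1, HasDerivWithinAt W ((fderiv ℝ Z (γ t)).comp (W t)) (Icc 0 1) t)
    {δ ε : ℝ} (hε : 0 ≤ ε)
    (hδ : ∀ s ∈ Icc (0 : ℝ) 1, ∀ w ∈ ball (γ s) δ, ‖fderiv ℝ Z w - fderiv ℝ Z (γ s)‖ ≤ ε)
    (hαδ : ∀ s ∈ Icc (0 : ℝ) 1, α s ∈ ball (γ s) δ)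
    (hβδ : ∀ s ∈ Icc (0 : ℝ) 1, β s ∈ ball (γ s) δ) :
    ‖α 1 - β 1 - W 1 (α 0 - β 0)‖ ≤ 4 * ε * ‖α 0 - β 0‖ := by
  have h_lin : ∀ s, LipschitzWith (1 / 2) (fderiv ℝ Z (γ s)) := fun s =>
    (fderiv ℝ Z (γ s)).lipschitz.weaken (NNReal.coe_le_coe.1 (norm_fderiv_le_of_lipschitz ℝ hLip))
  have h_diff : ∀ s ∈ Icc (0 : ℝ) 1,
      ‖Z (α s) - Z (β s) - fderiv ℝ Z (γ s) (α s - β s)‖ ≤ ε * (2 * ‖α 0 - β 0‖) := fun s hs =>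
    calc _ ≤ ε * ‖α s - β s‖ := (convex_ball (γ s) δ).norm_image_sub_le_of_norm_fderiv_le'
            (fun u _ => hZ u) (hδ s hs) (hβδ s hs) (hαδ s hs)
      _ ≤ ε * (2 * ‖α 0 - β 0‖) := by
          simp only [← dist_eq_norm]
          gcongr
          exact dist_le_two_mul_of_isIntegralCurve hLip hα hβ hs
  have h := dist_le_of_approx_trajectories_ODE (v := fun s => fderiv ℝ Z (γ s)) (K := 1 / 2)
    (δ := 0) (εg := 0) h_lin (hα.continuous.sub hβ.continuous).continuousOn
    (fun s _ => ((hα s).sub (hβ s)).hasDerivWithinAt)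
    (fun s hs => (dist_eq_norm _ _).trans_le (h_diff s (Ico_subset_Icc_self hs)))
    (fun s hs => ((hW s hs).continuousWithinAt.clm_apply continuousWithinAt_const))
    (fun s hs => (((hW s (Ico_subset_Icc_self hs)).mono_of_mem_nhdsWithin
      (Icc_mem_nhdsGE_of_mem hs)).clm_apply (hasDerivWithinAt_const s _ (α 0 - β 0))).congr_deriv
        (by rw [map_zero, add_zero]; rfl))
    (fun s _ => (dist_self _).le) (by simp [hW₀]) 1 (right_mem_Icc.2 zero_le_one)
  calc ‖α 1 - β 1 - W 1 (α 0 - β 0)‖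
      ≤ gronwallBound 0 (1 / 2 : ℝ≥0) (ε * (2 * ‖α 0 - β 0‖) + 0) (1 - 0) := by
        simpa only [dist_eq_norm, Pi.sub_apply] using h
    _ = 4 * (ε * ‖α 0 - β 0‖) * (Real.exp (1 / 2) - 1) := by
        rw [gronwallBound_of_K_ne_0 (by norm_num), sub_zero,
          show ((1 / 2 : ℝ≥0) : ℝ) = 1 / 2 by norm_num]
        simp only [mul_one]
        ring
    _ ≤ 4 * (ε * ‖α 0 - β 0‖) * 1 := by
        gcongr
        linarith [exp_half_le_two]
    _ = 4 * ε * ‖α 0 - β 0‖ := by ring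

theorem contDiff_time_one_of_lipschitzWith_half [CompleteSpace V] {Z : V → V}
    (hZ : ContDiff ℝ 1 Z) (hLip : LipschitzWith (1 / 2) Z) {Φ : V → ℝ → V}
    (hΦ₀ : ∀ x, Φ x 0 = x) (hΦ : ∀ x, IsIntegralCurve (Φ x) fun _ => Z) :
    ContDiff ℝ 1 fun x => Φ x 1 := by
  have hDZ : Continuous (fderiv ℝ Z) := hZ.continuous_fderiv one_ne_zero
  suffices ∀ x, ∃ W : V →L[ℝ] V, HasStrictFDerivAt (fun x => Φ x 1) W x by
    choose W hW using this
    exact contDiff_one_of_hasStrictFDerivAt hW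
  intro x
  obtain ⟨W, hW₀, hW⟩ := exists_linear_ode_solution (hDZ.comp (hΦ x).continuous)
    fun s => (norm_fderiv_le_of_lipschitz ℝ hLip (x₀ := Φ x s)).trans_eq (by norm_num)
  refine ⟨W 1, .of_isLittleO (Asymptotics.isLittleO_iff.2 fun c hc => ?_)⟩
  obtain ⟨δ, hδ, h_unif⟩ := exists_forall_dist_lt_of_isCompact
    (isCompact_Icc.image (hΦ x).continuous) hDZ (ε := c / 4) (by positivity)
  have h_ball : ∀ y ∈ ball x (δ / 2), ∀ s ∈ Icc (0 : ℝ) 1, Φ y s ∈ ball (Φ x s) δ :=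
    fun y hy s hs => by
      have := dist_le_two_mul_of_isIntegralCurve hLip (hΦ y) (hΦ x) hs
      rw [hΦ₀, hΦ₀] at this
      rw [mem_ball] at hy ⊢
      linarith
  filter_upwards [prod_mem_nhds (ball_mem_nhds x (half_pos hδ)) (ball_mem_nhds x (half_pos hδ))]
    with p hp
  have := norm_sub_variation_le (hZ.differentiable one_ne_zero) hLip (hΦ p.1) (hΦ p.2) hW₀ hW
    (by positivity) (fun s hs w hw => (dist_eq_norm _ _).symm.trans_le
      (h_unif _ (mem_image_of_mem _ hs) w hw).le) (h_ball p.1 hp.1) (h_ball p.2 hp.2)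
  rw [hΦ₀, hΦ₀] at this
  exact this.trans_eq (by ring)

theorem contDiff_time_one_of_lipschitzWith [CompleteSpace V] {Z : V → V} (hZ : ContDiff ℝ 1 Z)
    {K : ℝ≥0} (hLip : LipschitzWith K Z) {Φ : V → ℝ → V} (hΦ₀ : ∀ x, Φ x 0 = x)
    (hΦ : ∀ x, IsIntegralCurve (Φ x) fun _ => Z) : ContDiff ℝ 1 fun x => Φ x 1 := by
  obtain ⟨n, hn⟩ := exists_nat_gt (2 * K)
  have hn₀ : (n : ℝ) ≠ 0 := by exact_mod_cast (pos_of_gt hn).ne'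
  have h_small : ContDiff ℝ 1 fun x => Φ x (n : ℝ)⁻¹ := by
    have h_lip : LipschitzWith (1 / 2) ((n : ℝ)⁻¹ • Z) := by
      refine ((lipschitzWith_smul (n : ℝ)⁻¹).comp hLip).weaken ?_
      rw [nnnorm_inv, Real.nnnorm_natCast, inv_mul_le_iff₀ (pos_of_gt hn), mul_one_div,
        le_div_iff₀ two_pos, mul_comm]
      exact hn.le
    simpa using contDiff_time_one_of_lipschitzWith_half (contDiff_const.smul hZ) h_lip
      (Φ := fun x s => Φ x (s * (n : ℝ)⁻¹)) (by simpa using hΦ₀)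
      fun x => (hΦ x).comp_mul (n : ℝ)⁻¹
  have h_iter : ∀ m : ℕ, ContDiff ℝ 1 fun x => Φ x (m * (n : ℝ)⁻¹) := by
    intro m
    induction m with
    | zero => simpa [hΦ₀] using contDiff_fun_id
    | succ m ih =>
      simp only [Nat.cast_succ, add_one_mul, flow_add hZ hΦ₀ hΦ]
      exact h_small.comp ih
  simpa [hn₀] using h_iter n

theorem contDiff_time_one [FiniteDimensional ℝ V] {Z : V → V} (hZ : ContDiff ℝ 1 Z)
    {Φ : V → ℝ → V} (hΦ₀ : ∀ x, Φ x 0 = x) (hΦ : ∀ x, IsIntegralCurve (Φ x) fun _ => Z) :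
    ContDiff ℝ 1 fun x => Φ x 1 := by
  have : ProperSpace V := FiniteDimensional.proper ℝ V
  refine contDiff_iff_contDiffAt.2 fun x => ?_
  obtain ⟨R, hR, h_ball⟩ := (isCompact_Icc.image (hΦ x).continuous (s := Icc 0 1)).isBounded
    |>.subset_closedBall_lt 0 0
  let χ : ContDiffBump (0 : V) := ⟨R + 1, R + 2, by linarith, by linarith⟩
  let Z' : V → V := fun y => χ y • Z y
  have hZ' : ContDiff ℝ 1 Z' := χ.contDiff.smul hZ
  have h_supp : HasCompactSupport Z' := χ.hasCompactSupport.smul_right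
  have h_eq : ∀ y ∈ closedBall (0 : V) (R + 1), Z' y = Z y := fun y hy => by
    simp only [Z', χ.one_of_mem_closedBall hy, one_smul]
  obtain ⟨K, hK⟩ := hZ'.lipschitzWith_of_hasCompactSupport h_supp one_ne_zero
  obtain ⟨M, hM⟩ := h_supp.exists_bound_of_continuous hZ'.continuous
  choose Ψ hΨ₀ hΨ using exists_isIntegralCurve_const hZ'
    (M := M.toNNReal) fun y => (hM y).trans (Real.le_coe_toNNReal M)
  have h_center : EqOn (Φ x) (Ψ x) (Icc 0 1) :=
    eqOn_Icc_of_isIntegralCurve_const hZ' (hΦ x) (hΨ x) (by rw [hΦ₀, hΨ₀]) fun t ht =>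
      (h_eq _ (closedBall_subset_closedBall (by linarith)
        (h_ball (mem_image_of_mem _ (Ico_subset_Icc_self ht))))).symm
  refine (contDiff_time_one_of_lipschitzWith hZ' hK hΨ₀ hΨ).contDiffAt.congr_of_eventuallyEq ?_
  filter_upwards [ball_mem_nhds x (Real.exp_pos (-K))] with y hy
  refine eqOn_Icc_of_isIntegralCurve_const hZ (hΨ y) (hΦ y) (by rw [hΦ₀, hΨ₀]) (fun t ht => ?_)
    (right_mem_Icc.2 zero_le_one) |>.symm
  refine h_eq _ ?_
  have ht' := Ico_subset_Icc_self ht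
  have h_near : dist (Ψ y t) (Ψ x t) ≤ 1 := calc
    dist (Ψ y t) (Ψ x t) ≤ dist (Ψ y 0) (Ψ x 0) * Real.exp (K * (t - 0)) :=
      dist_le_of_trajectories_ODE (v := fun _ => Z') (fun _ => hK)
        (hΨ y).continuous.continuousOn (fun s _ => (hΨ y s).hasDerivWithinAt)
        (hΨ x).continuous.continuousOn (fun s _ => (hΨ x s).hasDerivWithinAt) le_rfl t ht'
    _ ≤ Real.exp (-K) * Real.exp K := by
      rw [hΨ₀, hΨ₀, sub_zero]
      gcongr
      · exact (mem_ball.1 hy).le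
      · exact mul_le_of_le_one_right K.2 ht.2.le
    _ = 1 := by rw [← Real.exp_add, neg_add_cancel, Real.exp_zero]
  have h_base : dist (Ψ x t) 0 ≤ R := h_center ht' ▸ h_ball (mem_image_of_mem _ ht')
  rw [mem_closedBall]
  linarith [dist_triangle (Ψ y t) (Ψ x t) 0]

theorem exists_parametric_flow [FiniteDimensional ℝ V] {Λ : Type*} [NormedAddCommGroup Λ]
    [NormedSpace ℝ Λ] [FiniteDimensional ℝ Λ] {Y : Λ → V → V}
    (hY : ContDiff ℝ 1 fun p : Λ × V => Y p.1 p.2) {M : ℝ≥0} (hM : ∀ l x, ‖Y l x‖ ≤ M) :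
    ∃ Φ : Λ → V → ℝ → V, (∀ l x, Φ l x 0 = x) ∧
      (∀ l x, IsIntegralCurve (Φ l x) fun _ => Y l) ∧
      ContDiff ℝ 1 fun p : Λ × V × ℝ => Φ p.1 p.2.1 p.2.2 := by
  have : ProperSpace V := FiniteDimensional.proper ℝ V
  choose Φ hΦ₀ hΦ using fun l =>
    exists_isIntegralCurve_const (hY.comp (contDiff_prodMk_right l)) (hM l)
  refine ⟨Φ, hΦ₀, hΦ, ?_⟩
  have h_suspension : ContDiff ℝ 1 fun p : Λ × V × ℝ =>
      ((0 : Λ), p.2.2 • Y p.1 p.2.1, (0 : ℝ)) := by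
    refine contDiff_const.prodMk ((contDiff_snd.snd.smul ?_).prodMk contDiff_const)
    exact hY.comp (contDiff_fst.prodMk contDiff_snd.fst)
  have h_time_one := contDiff_time_one h_suspension
    (Φ := fun p r => (p.1, Φ p.1 p.2.1 (r * p.2.2), p.2.2)) (by simp [hΦ₀]) fun p r =>
      (hasDerivAt_const r p.1).prodMk
        (((hΦ p.1 p.2.1).comp_mul p.2.2 r).prodMk (hasDerivAt_const r p.2.2))
  simpa using h_time_one.snd.fst

theorem exists_flow [FiniteDimensional ℝ V] {Z : V → V} (hZ : ContDiff ℝ 1 Z) {M : ℝ≥0}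
    (hM : ∀ x, ‖Z x‖ ≤ M) :
    ∃ Φ : V → ℝ → V, (∀ x, Φ x 0 = x) ∧ (∀ x, IsIntegralCurve (Φ x) fun _ => Z) ∧
      ContDiff ℝ 1 fun p : V × ℝ => Φ p.1 p.2 := by
  obtain ⟨Φ, hΦ₀, hΦ, hΦ_diff⟩ := exists_parametric_flow (Λ := ℝ) (Y := fun _ => Z)
    (hZ.comp contDiff_snd) fun _ => hM
  exact ⟨Φ 0, hΦ₀ 0, hΦ 0, hΦ_diff.comp (contDiff_prodMk_right (0 : ℝ))⟩

theorem fderiv_apply_eq_of_hasDerivAt_comp {W : Type*} [NormedAddCommGroup W] [NormedSpace ℝ W]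
    {G : V → W} {Z : V → V} {γ : ℝ → V} (hγ : IsIntegralCurve γ fun _ => Z) {t : ℝ}
    (hG : DifferentiableAt ℝ G (γ t)) {c : W} (hc : HasDerivAt (G ∘ γ) c t) :
    fderiv ℝ G (γ t) (Z (γ t)) = c :=
  (hG.hasFDerivAt.comp_hasDerivAt t (hγ t)).unique hc

end Flow

section ParametricIntegral

open MeasureTheory

variable {V : Type*} [NormedAddCommGroup V] [NormedSpace ℝ V] {F : V × ℝ → ℝ}

theorem hasFDerivAt_parametric_intervalIntegral [FiniteDimensional ℝ V] (hF : ContDiff ℝ 1 F)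
    (a b : ℝ) (x : V) : HasFDerivAt (fun x => ∫ s in a..b, F (x, s))
      (∫ s in a..b, (fderiv ℝ F (x, s)).comp (ContinuousLinearMap.inl ℝ V ℝ)) x := by
  have hF' : Continuous fun p => (fderiv ℝ F p).comp (ContinuousLinearMap.inl ℝ V ℝ) :=
    (hF.continuous_fderiv one_ne_zero).clm_comp continuous_const
  have hslice : ∀ y : V, Continuous fun s : ℝ => (y, s) := fun y => by fun_prop
  obtain ⟨C, hC⟩ := ((isCompact_closedBall x 1).prod
    (isCompact_uIcc (a := a) (b := b))).exists_bound_of_continuousOn hF'.continuousOn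
  refine intervalIntegral.hasFDerivAt_integral_of_dominated_of_fderiv_le (𝕜 := ℝ) (μ := volume)
    (bound := fun _ => C) (F := fun x s => F (x, s))
    (F' := fun x s => (fderiv ℝ F (x, s)).comp (ContinuousLinearMap.inl ℝ V ℝ))
    (closedBall_mem_nhds x one_pos) (.of_forall fun y => ?_) ?_ ?_ ?_ intervalIntegrable_const ?_
  · exact (hF.continuous.comp (hslice y)).aestronglyMeasurable
  · exact (hF.continuous.comp (hslice x)).intervalIntegrable _ _
  · exact (hF'.comp (hslice x)).aestronglyMeasurable
  · exact .of_forall fun t ht y hy => hC (y, t) ⟨hy, uIoc_subset_uIcc ht⟩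
  · exact .of_forall fun t _ y _ =>
      (hF.differentiable one_ne_zero (y, t)).hasFDerivAt.comp y (hasFDerivAt_prodMk_left y t)

theorem contDiff_one_parametric_intervalIntegral [FiniteDimensional ℝ V] (hF : ContDiff ℝ 1 F)
    (a b : ℝ) : ContDiff ℝ 1 fun x => ∫ s in a..b, F (x, s) := by
  have hF' : Continuous fun p => (fderiv ℝ F p).comp (ContinuousLinearMap.inl ℝ V ℝ) :=
    (hF.continuous_fderiv one_ne_zero).clm_comp continuous_const
  have hderiv := hasFDerivAt_parametric_intervalIntegral hF a b
  refine contDiff_one_iff_fderiv.2 ⟨fun x => (hderiv x).differentiableAt, ?_⟩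
  simp only [funext fun x => (hderiv x).fderiv]
  exact intervalIntegral.continuous_parametric_intervalIntegral_of_continuous' (μ := volume)
    (f := fun x s => (fderiv ℝ F (x, s)).comp (ContinuousLinearMap.inl ℝ V ℝ)) hF' a b

theorem contDiff_one_parametric_primitive [FiniteDimensional ℝ V] (hF : ContDiff ℝ 1 F) :
    ContDiff ℝ 1 fun p : V × ℝ => ∫ s in (0 : ℝ)..p.2, F (p.1, s) := by
  have hsubst : ∀ p : V × ℝ, ∫ s in (0 : ℝ)..p.2, F (p.1, s)
      = ∫ u in (0 : ℝ)..1, p.2 * F (p.1, p.2 * u) := fun p => by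
    rw [intervalIntegral.integral_const_mul,
      intervalIntegral.mul_integral_comp_mul_left (f := fun s => F (p.1, s)), mul_zero,
      mul_one]
  simp only [hsubst]
  exact contDiff_one_parametric_intervalIntegral
    (F := fun q : (V × ℝ) × ℝ => q.1.2 * F (q.1.1, q.1.2 * q.2)) (by fun_prop) 0 1

end ParametricIntegral

/-! ### Continuous logarithms of planar maps -/

section Logarithm

variable {X : Type*}

theorem exists_continuousOn_exp_eq [NormedAddCommGroup X] [NormedSpace ℝ X] {s : Set X}
    (hs : Convex ℝ s) {g : X → ℂ} (hg : ContinuousOn g s) (hg₀ : ∀ x ∈ s, g x ≠ 0) {x₀ : X}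
    (hx₀ : x₀ ∈ s) {w₀ : ℂ} (hw₀ : Complex.exp w₀ = g x₀) :
    ∃ ℓ : X → ℂ, ContinuousOn ℓ s ∧ ℓ x₀ = w₀ ∧ ∀ x ∈ s, Complex.exp (ℓ x) = g x := by
  have := hs.locallyPathConnectedSpace
  have := hs.contractibleSpace ⟨x₀, hx₀⟩
  obtain ⟨f, ⟨hf₀, hf⟩, -⟩ := Complex.isCoveringMapOn_exp.existsUnique_continuousMap_lifts
    ⟨s.domRestrict g, continuousOn_iff_continuous_domRestrict.1 hg⟩ (a₀ := ⟨x₀, hx₀⟩) hw₀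
    (fun x => hg₀ x x.2)
  refine ⟨Function.extend Subtype.val f 0, ?_, ?_, fun x hx => ?_⟩
  · rw [continuousOn_iff_continuous_domRestrict]
    convert f.continuous using 1
    ext x
    exact Subtype.val_injective.extend_apply f 0 x
  · exact (Subtype.val_injective.extend_apply f 0 ⟨x₀, hx₀⟩).trans hf₀
  · rw [Subtype.val_injective.extend_apply f 0 ⟨x, hx⟩]
    exact congrFun hf ⟨x, hx⟩

theorem eqOn_of_exp_eqOn [TopologicalSpace X] {s : Set X} (hs : IsPreconnected s) {f g : X → ℂ}
    (hf : ContinuousOn f s) (hg : ContinuousOn g s)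
    (h : ∀ x ∈ s, Complex.exp (f x) = Complex.exp (g x)) {x₀ : X} (hx₀ : x₀ ∈ s)
    (h₀ : f x₀ = g x₀) : EqOn f g s :=
  (T2Space.isSeparatedMap _).eqOn_of_comp_eqOn
    Complex.isCoveringMap_exp.isLocalHomeomorph.isLocallyInjective hs hf hg
    (fun x hx => Subtype.ext (h x hx)) hx₀ h₀

/-- A logarithm `ℓ` of `F ∘ exp` changes by `2πik` over the period of `exp`, where `k` is the
winding number of `F`; hence `ℓ w - k * w` descends along `exp`. -/
theorem exists_eq_zpow_mul_exp {F : ℂ → ℂ} (hF : ContinuousOn F {0}ᶜ) (hF₀ : ∀ z ≠ 0, F z ≠ 0) :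
    ∃ (k : ℤ) (η : ℂ → ℂ), ContinuousOn η {0}ᶜ ∧ ∀ z ≠ 0, F z = z ^ k * Complex.exp (η z) := by
  have hFexp : Continuous fun w => F (Complex.exp w) :=
    hF.comp_continuous Complex.continuous_exp Complex.exp_ne_zero
  obtain ⟨ℓ, hℓ, -, hFℓ⟩ := exists_continuousOn_exp_eq convex_univ hFexp.continuousOn
    (fun w _ => hF₀ _ (Complex.exp_ne_zero w)) (mem_univ 0)
    (Complex.exp_log (hF₀ _ (Complex.exp_ne_zero 0)))
  rw [continuousOn_univ] at hℓ
  set p : ℂ := 2 * Real.pi * Complex.I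
  have hexp_p : ∀ w, Complex.exp (w + p) = Complex.exp w := Complex.exp_periodic
  obtain ⟨k, hk⟩ : ∃ k : ℤ, ℓ (0 + p) = ℓ 0 + k * p :=
    Complex.exp_eq_exp_iff_exists_int.1 (by simp only [hFℓ _ (mem_univ _), hexp_p])
  have hℓ_add : ∀ w, ℓ (w + p) = ℓ w + k * p := fun w =>
    eqOn_of_exp_eqOn (f := fun w => ℓ (w + p)) (g := fun w => ℓ w + k * p)
      isPreconnected_univ (by fun_prop) (by fun_prop)
      (fun v _ => by
        rw [Complex.exp_periodic.int_mul, hFℓ _ (mem_univ _), hFℓ _ (mem_univ _), hexp_p])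
      (mem_univ 0) hk (mem_univ w)
  have hper : Function.Periodic (fun w => ℓ w - k * w) p := fun w => by
    simp only [hℓ_add w]
    ring
  have hdescend : ∀ w, ℓ (Complex.log (Complex.exp w)) - k * Complex.log (Complex.exp w)
      = ℓ w - k * w := fun w => by
    obtain ⟨m, hm⟩ := Complex.exp_eq_exp_iff_exists_int.1
      (Complex.exp_log (Complex.exp_ne_zero w))
    rw [hm]
    exact hper.int_mul m w
  refine ⟨k, fun z => ℓ (Complex.log z) - k * Complex.log z, ?_, fun z hz => ?_⟩
  · rw [continuousOn_iff_continuous_domRestrict]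
    refine (Complex.isCoveringMap_exp.isQuotientMap fun z =>
      ⟨Complex.log z, Subtype.ext (Complex.exp_log z.2)⟩).continuous_iff.2 ?_
    exact (by fun_prop : Continuous fun w => ℓ w - k * w).congr fun w => (hdescend w).symm
  · rw [Complex.exp_sub, hFℓ _ (mem_univ _), Complex.exp_log hz, Complex.exp_int_mul,
      Complex.exp_log hz, mul_div_cancel₀ _ (zpow_ne_zero k hz)]

theorem exists_eq_zpow_mul_exp_of_le_norm {F : ℂ → ℂ} {R : ℝ} (hR : 0 < R)
    (hF : ContinuousOn F {z | R ≤ ‖z‖}) (hF₀ : ∀ z, R ≤ ‖z‖ → F z ≠ 0) :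
    ∃ (k : ℤ) (η : ℂ → ℂ), Continuous η ∧ ∀ z, R ≤ ‖z‖ → F z = z ^ k * Complex.exp (η z) := by
  let r : ℂ → ℂ := fun z => (max ‖z‖ R / ‖z‖ : ℝ) • z
  have hr : ∀ z ≠ 0, R ≤ ‖r z‖ := fun z hz => by
    have : 0 ≤ max ‖z‖ R / ‖z‖ := by positivity
    rw [norm_smul, Real.norm_of_nonneg this, div_mul_cancel₀ _ (norm_ne_zero_iff.2 hz)]
    exact le_max_right _ _
  have hrc : ContinuousOn r {0}ᶜ := ContinuousOn.smul (ContinuousOn.div (by fun_prop)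
    (by fun_prop) fun z hz => norm_ne_zero_iff.2 hz) continuousOn_id
  obtain ⟨k, η, hη, h⟩ := exists_eq_zpow_mul_exp (hF.comp hrc hr) fun z hz => hF₀ _ (hr z hz)
  have hne : ∀ z : ℂ, R ≤ ‖z‖ → z ≠ 0 := fun z hz => norm_pos_iff.1 (hR.trans_le hz)
  obtain ⟨η', hη'⟩ := ContinuousMap.exists_restrict_eq
    (isClosed_le continuous_const continuous_norm)
    ⟨{z : ℂ | R ≤ ‖z‖}.domRestrict η, (hη.mono hne).domRestrict⟩
  refine ⟨k, η', η'.continuous, fun z hz => ?_⟩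
  have hrz : r z = z := by
    simp only [r, max_eq_left hz, div_self (norm_ne_zero_iff.2 (hne z hz)), one_smul]
  have hη'z : η' z = η z := DFunLike.congr_fun hη' (⟨z, hz⟩ : {z : ℂ | R ≤ ‖z‖})
  simpa only [Function.comp_apply, hrz, hη'z] using h z (hne z hz)

end Logarithm

/-! ### Integral curves cross a transversal segment at most once -/

section Angle

theorem abs_lt_pi_div_two_of_cos_pos {X : Type*} [TopologicalSpace X] {s : Set X}
    (hs : IsPreconnected s) {g : X → ℝ} (hg : ContinuousOn g s) (hcos : ∀ x ∈ s, 0 < Real.cos (g x))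
    {x₀ : X} (hx₀ : x₀ ∈ s) (h₀ : |g x₀| < Real.pi / 2) {x : X} (hx : x ∈ s) :
    |g x| < Real.pi / 2 := by
  by_contra! h
  obtain ⟨y, hy, hgy⟩ := hs.intermediate_value hx₀ hx hg.abs ⟨h₀.le, h⟩
  have hcos_y : Real.cos (g y) = 0 := by
    rw [← Real.cos_abs, show |g y| = Real.pi / 2 from hgy, Real.cos_pi_div_two]
  exact (hcos y hy).ne' hcos_y

theorem exists_int_abs_sub_lt_of_cos_pos {θ : ℝ} (hθ : 0 < Real.cos θ) :
    ∃ k : ℤ, |θ - k * (2 * Real.pi)| < Real.pi / 2 := by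
  have hπ := Real.two_pi_pos
  set k := round (θ / (2 * Real.pi))
  have hk : |θ - k * (2 * Real.pi)| ≤ Real.pi := by
    have h := abs_sub_round (θ / (2 * Real.pi))
    rw [show θ - k * (2 * Real.pi) = (θ / (2 * Real.pi) - k) * (2 * Real.pi) by field_simp,
      abs_mul, abs_of_pos hπ]
    linarith [mul_le_mul_of_nonneg_right h hπ.le]
  refine ⟨k, lt_of_not_ge fun h => hθ.not_ge ?_⟩
  rw [← Real.cos_sub_int_mul_two_pi θ k, ← Real.cos_abs]
  exact Real.cos_nonpos_of_pi_div_two_le_of_le h (by linarith [Real.pi_pos])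

theorem exists_int_forall_abs_sub_lt_of_cos_neg {X : Type*} [TopologicalSpace X] {s : Set X}
    (hs : IsPreconnected s) {g : X → ℝ} (hg : ContinuousOn g s)
    (hcos : ∀ x ∈ s, Real.cos (g x) < 0) :
    ∃ k : ℤ, ∀ x ∈ s, |g x - Real.pi - k * (2 * Real.pi)| < Real.pi / 2 := by
  rcases s.eq_empty_or_nonempty with rfl | ⟨x₀, hx₀⟩
  · simp
  have hcos' : ∀ x ∈ s, 0 < Real.cos (g x - Real.pi) := fun x hx => by
    rw [Real.cos_sub_pi]
    exact neg_pos.2 (hcos x hx)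
  obtain ⟨k, hk⟩ := exists_int_abs_sub_lt_of_cos_pos (hcos' x₀ hx₀)
  refine ⟨k, fun x hx => abs_lt_pi_div_two_of_cos_pos hs
    (g := fun x => g x - Real.pi - k * (2 * Real.pi)) (by fun_prop) (fun y hy => ?_) hx₀ hk hx⟩
  rw [Real.cos_sub_int_mul_two_pi]
  exact hcos' y hy

/-- The parameter domain of the chords of a curve on `[a, b]`, without the chords that are nearly
as long as `[a, b]`. -/
def truncatedTriangle (a b δ : ℝ) : Set (ℝ × ℝ) :=
  {p | a ≤ p.1 ∧ p.1 ≤ p.2 ∧ p.2 ≤ b ∧ p.2 - p.1 ≤ b - a - δ}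

theorem convex_truncatedTriangle (a b δ : ℝ) : Convex ℝ (truncatedTriangle a b δ) := by
  rintro ⟨s, t⟩ ⟨h₁, h₂, h₃, h₄⟩ ⟨s', t'⟩ ⟨h₁', h₂', h₃', h₄'⟩ c d hc hd hcd
  obtain rfl : d = 1 - c := by linarith
  simp only [truncatedTriangle, mem_ofPred_eq, Prod.smul_mk, Prod.mk_add_mk, smul_eq_mul] at *
  refine ⟨?_, ?_, ?_, ?_⟩ <;> nlinarith

variable {a b δ : ℝ} {T : ℝ × ℝ → ℝ}

theorem left_mem_truncatedTriangle {t : ℝ} (hδ : 0 ≤ δ) (ht : t ∈ Icc a (b - δ)) :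
    (a, t) ∈ truncatedTriangle a b δ :=
  ⟨le_rfl, ht.1, by linarith [ht.2], by linarith [ht.2]⟩

theorem right_mem_truncatedTriangle {s : ℝ} (hδ : 0 ≤ δ) (hs : s ∈ Icc (a + δ) b) :
    (s, b) ∈ truncatedTriangle a b δ :=
  ⟨by linarith [hs.1], hs.2, le_rfl, by linarith [hs.1]⟩

theorem corner_mem_truncatedTriangle {u : ℝ} (hδab : δ ≤ b - a) (hu : u ∈ Icc 0 δ) :
    (a + u, b - δ + u) ∈ truncatedTriangle a b δ :=
  ⟨by linarith [hu.1], by linarith, by linarith [hu.2], by linarith⟩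

theorem exists_chord_angle_eq (hδ : 0 < δ) (hδab : 2 * δ ≤ b - a)
    (hT : ContinuousOn T (truncatedTriangle a b δ))
    (ha : |T (a, a)| < Real.pi / 2) (hb : |T (b, b)| < Real.pi / 2)
    (hleft : ∀ t ∈ Icc a (a + δ), 0 < Real.cos (T (a, t)))
    (hright : ∀ s ∈ Icc (b - δ) b, 0 < Real.cos (T (s, b)))
    (hcorner : ∀ u ∈ Icc 0 δ, Real.cos (T (a + u, b - δ + u)) < 0) :
    ∃ s ∈ Icc (a + δ) (b - δ), T (s, b) = T (a, s) := by
  have := Real.pi_pos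
  have hTleft : ContinuousOn (fun t => T (a, t)) (Icc a (b - δ)) :=
    hT.comp (by fun_prop) fun t ht => left_mem_truncatedTriangle hδ.le ht
  have hTright : ContinuousOn (fun s => T (s, b)) (Icc (a + δ) b) :=
    hT.comp (by fun_prop) fun s hs => right_mem_truncatedTriangle hδ.le hs
  have hTcorner : ContinuousOn (fun u => T (a + u, b - δ + u)) (Icc 0 δ) :=
    hT.comp (by fun_prop) fun u hu => corner_mem_truncatedTriangle (by linarith) hu
  have hL := abs_lt.1 <| abs_lt_pi_div_two_of_cos_pos isPreconnected_Icc
    (hTleft.mono (Icc_subset_Icc_right (by linarith))) hleft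
    (left_mem_Icc.2 (by linarith)) ha (right_mem_Icc.2 (by linarith))
  have hR := abs_lt.1 <| abs_lt_pi_div_two_of_cos_pos isPreconnected_Icc
    (hTright.mono (Icc_subset_Icc_left (by linarith))) hright
    (right_mem_Icc.2 (by linarith)) hb (left_mem_Icc.2 (by linarith))
  obtain ⟨k, hk⟩ :=
    exists_int_forall_abs_sub_lt_of_cos_neg isPreconnected_Icc hTcorner hcorner
  have hk' := hk δ (right_mem_Icc.2 hδ.le)
  replace hk := hk 0 (left_mem_Icc.2 hδ.le)
  simp only [add_zero, sub_add_cancel, abs_lt] at hk hk'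
  have hdiff : ContinuousOn (fun s => T (s, b) - T (a, s)) (Icc (a + δ) (b - δ)) :=
    (hTright.mono (Icc_subset_Icc_right (by linarith))).sub
      (hTleft.mono (Icc_subset_Icc_left (by linarith)))
  have hzero : ∃ s ∈ Icc (a + δ) (b - δ), T (s, b) - T (a, s) = 0 := by
    rcases le_or_gt 0 k with hk0 | hk0
    · have : 0 ≤ (k : ℝ) * (2 * Real.pi) := by positivity
      exact intermediate_value_Icc' (by linarith) hdiff ⟨by linarith, by linarith⟩
    · have : (k : ℝ) * (2 * Real.pi) ≤ -1 * (2 * Real.pi) := by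
        gcongr
        exact_mod_cast Int.le_sub_one_of_lt hk0
      exact intermediate_value_Icc (by linarith) hdiff ⟨by linarith, by linarith⟩
  simpa only [sub_eq_zero] using hzero

end Angle

section MeanVelocity

variable {V : Type*} [NormedAddCommGroup V] [NormedSpace ℝ V] {Z : V → V} {γ : ℝ → V}

/-- The chord slope of an integral curve `γ` of `Z` between two times, extended by `Z` itself to
the diagonal; the integral makes the joint continuity visible. -/
def meanVelocity (Z : V → V) (γ : ℝ → V) (p : ℝ × ℝ) : V :=
  ∫ u in (0 : ℝ)..1, Z (γ (p.1 + u * (p.2 - p.1)))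

theorem continuous_meanVelocity (hZ : Continuous Z) (hγ : Continuous γ) :
    Continuous (meanVelocity Z γ) :=
  intervalIntegral.continuous_parametric_intervalIntegral_of_continuous'
    (f := fun (p : ℝ × ℝ) u => Z (γ (p.1 + u * (p.2 - p.1)))) (by fun_prop) 0 1

theorem meanVelocity_self [CompleteSpace V] (s : ℝ) : meanVelocity Z γ (s, s) = Z (γ s) := by
  simp [meanVelocity]

theorem sub_smul_meanVelocity [CompleteSpace V] (hZ : Continuous Z)
    (hγ : IsIntegralCurve γ fun _ => Z) (s t : ℝ) :
    (t - s) • meanVelocity Z γ (s, t) = γ t - γ s := by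
  have hderiv : ∀ u ∈ uIcc (0 : ℝ) 1, HasDerivAt (fun u => γ (s + u * (t - s)))
      ((t - s) • Z (γ (s + u * (t - s)))) u := fun u _ => by
    simpa [Function.comp_def] using
      (hγ (s + u * (t - s))).scomp u (((hasDerivAt_id u).mul_const (t - s)).const_add s)
  have hcont : Continuous fun u => (t - s) • Z (γ (s + u * (t - s))) := by
    have := hγ.continuous
    fun_prop
  rw [meanVelocity, ← intervalIntegral.integral_smul,
    intervalIntegral.integral_eq_sub_of_hasDerivAt hderiv (hcont.intervalIntegrable 0 1)]
  simp only [one_mul, zero_mul, add_zero, add_sub_cancel]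

theorem meanVelocity_ne_zero [CompleteSpace V] (hZ : Continuous Z) (hZ₀ : ∀ z, Z z ≠ 0)
    (hγ : IsIntegralCurve γ fun _ => Z) {s t : ℝ} (hst : s ≠ t → γ s ≠ γ t) :
    meanVelocity Z γ (s, t) ≠ 0 := by
  rcases eq_or_ne s t with rfl | hne
  · rw [meanVelocity_self]
    exact hZ₀ _
  · intro h
    have := sub_smul_meanVelocity hZ hγ s t
    rw [h, smul_zero] at this
    exact hst hne (sub_eq_zero.1 this.symm).symm

theorem mem_segment_of_sameRay_meanVelocity [CompleteSpace V] (hZ : Continuous Z)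
    (hγ : IsIntegralCurve γ fun _ => Z) {a s b : ℝ} (has : a ≤ s) (hsb : s ≤ b)
    (h : SameRay ℝ (meanVelocity Z γ (a, s)) (meanVelocity Z γ (s, b))) :
    γ s ∈ segment ℝ (γ a) (γ b) := by
  rw [mem_segment_iff_wbtw, wbtw_iff_sameRay_vsub, vsub_eq_sub, vsub_eq_sub,
    ← sub_smul_meanVelocity hZ hγ a s, ← sub_smul_meanVelocity hZ hγ s b]
  exact (h.nonneg_smul_left (sub_nonneg.2 has)).nonneg_smul_right (sub_nonneg.2 hsb)

end MeanVelocity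

section Transversal

variable {Z : ℂ → ℂ} {γ : ℝ → ℂ} {a b δ s t : ℝ}

theorem sub_mul_re_meanVelocity (hZ : Continuous Z) (hγ : IsIntegralCurve γ fun _ => Z)
    (s t : ℝ) : (t - s) * (meanVelocity Z γ (s, t)).re = (γ t).re - (γ s).re := by
  rw [← Complex.sub_re, ← sub_smul_meanVelocity hZ hγ, Complex.smul_re, smul_eq_mul]

theorem re_meanVelocity_pos (hZ : Continuous Z) (hγ : Continuous γ) (hst : s ≤ t)
    (hpos : ∀ u ∈ Icc s t, 0 < (Z (γ u)).re) : 0 < (meanVelocity Z γ (s, t)).re := by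
  have hcont : Continuous fun u => Z (γ (s + u * (t - s))) := by fun_prop
  have hre : (meanVelocity Z γ (s, t)).re = ∫ u in (0 : ℝ)..1, (Z (γ (s + u * (t - s)))).re :=
    (Complex.reCLM.intervalIntegral_comp_comm (hcont.intervalIntegrable 0 1)).symm
  rw [hre]
  refine intervalIntegral.intervalIntegral_pos_of_pos_on
    ((Complex.continuous_re.comp hcont).intervalIntegrable 0 1) (fun u hu => hpos _ ?_) one_pos
  constructor <;> nlinarith [hu.1, hu.2]

theorem strictMonoOn_re_of_isIntegralCurve (hZ : Continuous Z)
    (hγ : IsIntegralCurve γ fun _ => Z) (hpos : ∀ u ∈ Icc a b, 0 < (Z (γ u)).re) :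
    StrictMonoOn (fun u => (γ u).re) (Icc a b) := fun s hs t ht hst =>
  sub_pos.1 <| sub_mul_re_meanVelocity hZ hγ s t ▸ mul_pos (sub_pos.2 hst)
    (re_meanVelocity_pos hZ hγ.continuous hst.le fun u hu =>
      hpos u ⟨hs.1.trans hu.1, hu.2.trans ht.2⟩)

theorem re_meanVelocity_neg_of_return (hZ : Continuous Z) (hγ : IsIntegralCurve γ fun _ => Z)
    (hδ : 0 < δ) (hδab : 2 * δ ≤ b - a) (hre : (γ a).re = (γ b).re)
    (hleft : ∀ t ∈ Icc a (a + δ), 0 < (Z (γ t)).re)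
    (hright : ∀ t ∈ Icc (b - δ) b, 0 < (Z (γ t)).re) {u : ℝ} (hu : u ∈ Icc 0 δ) :
    (meanVelocity Z γ (a + u, b - δ + u)).re < 0 := by
  have hmono_left := strictMonoOn_re_of_isIntegralCurve hZ hγ hleft
  have hmono_right := strictMonoOn_re_of_isIntegralCurve hZ hγ hright
  have hau : a + u ∈ Icc a (a + δ) := ⟨by linarith [hu.1], by linarith [hu.2]⟩
  have hbu : b - δ + u ∈ Icc (b - δ) b := ⟨by linarith [hu.1], by linarith [hu.2]⟩
  have ha : a ∈ Icc a (a + δ) := left_mem_Icc.2 (by linarith)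
  have hb : b ∈ Icc (b - δ) b := right_mem_Icc.2 (by linarith)
  have hlt : (γ (b - δ + u)).re < (γ (a + u)).re := by
    rcases hu.2.eq_or_lt with rfl | huδ
    · calc (γ (b - u + u)).re = (γ a).re := by rw [sub_add_cancel, hre]
        _ < (γ (a + u)).re := hmono_left ha hau (by linarith)
    · calc (γ (b - δ + u)).re < (γ b).re := hmono_right hbu hb (by linarith)
        _ = (γ a).re := hre.symm
        _ ≤ (γ (a + u)).re := hmono_left.monotoneOn ha hau (by linarith [hu.1])
  have := sub_mul_re_meanVelocity hZ hγ (a + u) (b - δ + u)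
  nlinarith

theorem exists_pos_forall_near_endpoints {P : ℝ → Prop} (hab : a < b) (ha : ∀ᶠ t in 𝓝 a, P t)
    (hb : ∀ᶠ t in 𝓝 b, P t) :
    ∃ δ > 0, 2 * δ < b - a ∧ (∀ t ∈ Icc a (a + δ), P t) ∧ ∀ t ∈ Icc (b - δ) b, P t := by
  simp only [Metric.nhds_basis_closedBall.eventually_iff, Real.closedBall_eq_Icc] at ha hb
  obtain ⟨δ₁, hδ₁, h₁⟩ := ha
  obtain ⟨δ₂, hδ₂, h₂⟩ := hb
  obtain ⟨δ, hδ, hδ_lt⟩ := exists_between (lt_min (lt_min hδ₁ hδ₂) (half_pos (sub_pos.2 hab)))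
  simp only [lt_min_iff] at hδ_lt
  exact ⟨δ, hδ, by linarith, fun t ht => h₁ ⟨by linarith [ht.1], by linarith [ht.2]⟩,
    fun t ht => h₂ ⟨by linarith [ht.1], by linarith [ht.2]⟩⟩

theorem exists_log_meanVelocity (hZ : Continuous Z) (hZ₀ : ∀ z, Z z ≠ 0)
    (hγ : IsIntegralCurve γ fun _ => Z) (hab : a ≤ b) (hδab : δ ≤ b - a)
    (hseg : ∀ z ∈ segment ℝ (γ a) (γ b), 0 < (Z z).re)
    (hinj : ∀ p ∈ truncatedTriangle a b δ, p.1 ≠ p.2 → γ p.1 ≠ γ p.2) :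
    ∃ L : ℝ × ℝ → ℂ, ContinuousOn L (truncatedTriangle a b δ) ∧
      (∀ p ∈ truncatedTriangle a b δ, Complex.exp (L p) = meanVelocity Z γ p) ∧
      |(L (a, a)).im| < Real.pi / 2 ∧ |(L (b, b)).im| < Real.pi / 2 := by
  have hdiag : ∀ s ∈ Icc a b, (s, s) ∈ truncatedTriangle a b δ := fun s hs =>
    ⟨hs.1, le_rfl, hs.2, by simpa using hδab⟩
  have hexp_log := Complex.exp_log (hZ₀ (γ a))
  obtain ⟨ℓ, hℓ, hℓa, hZℓ⟩ := exists_continuousOn_exp_eq convex_univ hZ.continuousOn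
    (fun z _ => hZ₀ z) (mem_univ (γ a)) hexp_log
  rw [continuousOn_univ] at hℓ
  obtain ⟨L, hL, hLa, hexpL⟩ := exists_continuousOn_exp_eq (convex_truncatedTriangle a b δ)
    (continuous_meanVelocity hZ hγ.continuous).continuousOn
    (fun p hp => meanVelocity_ne_zero hZ hZ₀ hγ (hinj p hp)) (hdiag a (left_mem_Icc.2 hab))
    (by rw [meanVelocity_self, hexp_log])
  have hLb : L (b, b) = ℓ (γ b) :=
    eqOn_of_exp_eqOn (f := fun s => L (s, s)) (g := fun s => ℓ (γ s)) isPreconnected_Icc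
      (hL.comp (by fun_prop) hdiag) (hℓ.comp hγ.continuous).continuousOn
      (fun s hs => by rw [hexpL _ (hdiag s hs), hZℓ _ (mem_univ _), meanVelocity_self])
      (left_mem_Icc.2 hab) (hLa.trans hℓa.symm) (right_mem_Icc.2 hab)
  have hangle_a : |(Complex.log (Z (γ a))).im| < Real.pi / 2 := by
    rw [Complex.log_im, Complex.abs_arg_lt_pi_div_two_iff]
    exact .inl (hseg _ (left_mem_segment ℝ _ _))
  have hangle_b : |(ℓ (γ b)).im| < Real.pi / 2 :=
    abs_lt_pi_div_two_of_cos_pos (convex_segment (γ a) (γ b)).isPreconnected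
      (g := fun z => (ℓ z).im) (Complex.continuous_im.comp hℓ).continuousOn
      (fun z hz => by
        have := hseg z hz
        rw [← hZℓ z (mem_univ z), Complex.exp_re] at this
        exact pos_of_mul_pos_right this (Real.exp_pos _).le)
      (left_mem_segment ℝ _ _) (by rwa [hℓa]) (right_mem_segment ℝ _ _)
  exact ⟨L, hL, hexpL, by rwa [hLa], by rwa [hLb]⟩

theorem sameRay_exp_of_im_eq {z w : ℂ} (h : z.im = w.im) :
    SameRay ℝ (Complex.exp z) (Complex.exp w) := by
  have hw : w = (w.re - z.re : ℝ) + z := by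
    apply Complex.ext <;> simp [h]
  rw [hw, Complex.exp_add, ← Complex.ofReal_exp, ← Complex.real_smul]
  exact SameRay.sameRay_pos_smul_right _ (Real.exp_pos _)

theorem apply_ne_of_return_notMem (hZ : ContDiff ℝ 1 Z) (hγ : IsIntegralCurve γ fun _ => Z)
    (hs : s < t) (hlen : t - s < b - a) (h : ∀ s ∈ Ioo a b, γ s ≠ γ a) : γ s ≠ γ t := by
  intro hst
  have hper : γ = γ ∘ (· + (t - s)) :=
    eq_of_isIntegralCurve_const hZ hγ (hγ.comp_add (t - s)) (t₀ := s) (by simpa using hst)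
  exact h (a + (t - s)) ⟨by linarith, by linarith⟩ (congrFun hper a).symm

/-- This is Hopf's Umlaufsatz argument: the direction of the chord from `γ s` to `γ t` has a
continuous angle on the triangle of times `s ≤ t`. -/
theorem exists_sameRay_meanVelocity_of_return (hZ : Continuous Z) (hZ₀ : ∀ z, Z z ≠ 0)
    (hγ : IsIntegralCurve γ fun _ => Z) (hδ : 0 < δ) (hδab : 2 * δ ≤ b - a)
    (hre : (γ a).re = (γ b).re) (hseg : ∀ z ∈ segment ℝ (γ a) (γ b), 0 < (Z z).re)
    (hleft : ∀ t ∈ Icc a (a + δ), 0 < (Z (γ t)).re)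
    (hright : ∀ t ∈ Icc (b - δ) b, 0 < (Z (γ t)).re)
    (hinj : ∀ p ∈ truncatedTriangle a b δ, p.1 ≠ p.2 → γ p.1 ≠ γ p.2) :
    ∃ s ∈ Icc (a + δ) (b - δ),
      SameRay ℝ (meanVelocity Z γ (a, s)) (meanVelocity Z γ (s, b)) := by
  obtain ⟨L, hL, hexpL, hLa, hLb⟩ :=
    exists_log_meanVelocity hZ hZ₀ hγ (by linarith) (by linarith) hseg hinj
  have hcos : ∀ p ∈ truncatedTriangle a b δ,
      (meanVelocity Z γ p).re = Real.exp (L p).re * Real.cos (L p).im := fun p hp => by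
    rw [← hexpL p hp, Complex.exp_re]
  have hcos_pos : ∀ p ∈ truncatedTriangle a b δ, (∀ u ∈ Icc p.1 p.2, 0 < (Z (γ u)).re) →
      0 < Real.cos (L p).im := fun p hp hpos =>
    pos_of_mul_pos_right (hcos p hp ▸ re_meanVelocity_pos hZ hγ.continuous hp.2.1 hpos)
      (Real.exp_pos _).le
  have hmem_left := fun t (ht : t ∈ Icc a (b - δ)) => left_mem_truncatedTriangle hδ.le ht
  have hmem_right := fun s (hs : s ∈ Icc (a + δ) b) => right_mem_truncatedTriangle hδ.le hs
  obtain ⟨s, hs, hangle⟩ := exists_chord_angle_eq (T := fun p => (L p).im) hδ hδab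
    (Complex.continuous_im.comp_continuousOn hL) hLa hLb
    (fun t ht => hcos_pos _ (hmem_left t ⟨ht.1, by linarith [ht.2]⟩)
      fun u hu => hleft u ⟨hu.1, hu.2.trans ht.2⟩)
    (fun s hs => hcos_pos _ (hmem_right s ⟨by linarith [hs.1], hs.2⟩)
      fun u hu => hright u ⟨hs.1.trans hu.1, hu.2⟩)
    (fun u hu => neg_of_mul_neg_right (hcos _ (corner_mem_truncatedTriangle (by linarith) hu) ▸
      re_meanVelocity_neg_of_return hZ hγ hδ hδab hre hleft hright hu) (Real.exp_pos _).le)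
  refine ⟨s, hs, ?_⟩
  rw [← hexpL _ (hmem_left s ⟨by linarith [hs.1], hs.2⟩),
    ← hexpL _ (hmem_right s ⟨hs.1, by linarith [hs.2]⟩)]
  exact sameRay_exp_of_im_eq hangle.symm

theorem exists_mem_segment_of_return (hZ : ContDiff ℝ 1 Z) (hZ₀ : ∀ z, Z z ≠ 0)
    (hγ : IsIntegralCurve γ fun _ => Z) (hab : a < b) (hre : (γ a).re = (γ b).re)
    (hseg : ∀ z ∈ segment ℝ (γ a) (γ b), 0 < (Z z).re) :
    ∃ s ∈ Ioo a b, γ s ∈ segment ℝ (γ a) (γ b) := by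
  by_contra! hreturn
  have hZγ : Continuous fun t => (Z (γ t)).re :=
    Complex.continuous_re.comp (hZ.continuous.comp hγ.continuous)
  obtain ⟨δ, hδ, hδab, hleft, hright⟩ := exists_pos_forall_near_endpoints hab
    (hZγ.continuousAt.eventually_const_lt (hseg _ (left_mem_segment ℝ _ _)))
    (hZγ.continuousAt.eventually_const_lt (hseg _ (right_mem_segment ℝ _ _)))
  have hinj : ∀ p ∈ truncatedTriangle a b δ, p.1 ≠ p.2 → γ p.1 ≠ γ p.2 := fun p hp hne =>
    apply_ne_of_return_notMem hZ hγ (hp.2.1.lt_of_ne hne) (by linarith [hp.2.2.2])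
      fun s hs h => hreturn s hs (h ▸ left_mem_segment ℝ _ _)
  obtain ⟨s, hs, hray⟩ := exists_sameRay_meanVelocity_of_return hZ.continuous hZ₀ hγ hδ hδab.le
    hre hseg hleft hright hinj
  have has : a < s := by linarith [hs.1]
  have hsb : s < b := by linarith [hs.2]
  exact hreturn s ⟨has, hsb⟩
    (mem_segment_of_sameRay_meanVelocity hZ.continuous hγ has.le hsb.le hray)

theorem not_return_to_transversal (hZ : ContDiff ℝ 1 Z) (hZ₀ : ∀ z, Z z ≠ 0)
    (hγ : IsIntegralCurve γ fun _ => Z) (hab : a < b) (hre : (γ a).re = (γ b).re)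
    (hseg : ∀ z ∈ segment ℝ (γ a) (γ b), 0 < (Z z).re) : False := by
  have hZγ : Continuous fun t => (Z (γ t)).re :=
    Complex.continuous_re.comp (hZ.continuous.comp hγ.continuous)
  have hre_seg : ∀ z ∈ segment ℝ (γ a) (γ b), z.re = (γ a).re := fun z hz =>
    (convex_singleton (γ a).re |>.linear_preimage Complex.reLm).segment_subset rfl hre.symm hz
  obtain ⟨δ, hδ, hδab, hleft, -⟩ := exists_pos_forall_near_endpoints hab
    (hZγ.continuousAt.eventually_const_lt (hseg _ (left_mem_segment ℝ _ _)))
    (hZγ.continuousAt.eventually_const_lt (hseg _ (right_mem_segment ℝ _ _)))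
  have hmono := strictMonoOn_re_of_isIntegralCurve hZ.continuous hγ hleft
  obtain ⟨c, ⟨⟨hac, hcb⟩, hγc⟩, hmin⟩ : ∃ c, IsLeast
      (Icc (a + δ) b ∩ γ ⁻¹' segment ℝ (γ a) (γ b)) c :=
    (isCompact_Icc.inter_right (IsClosed.preimage hγ.continuous
      (closure_openSegment (𝕜 := ℝ) (γ a) (γ b) ▸ isClosed_closure))).exists_isLeast
      ⟨b, ⟨by linarith, le_rfl⟩, right_mem_segment ℝ _ _⟩
  have hsub : segment ℝ (γ a) (γ c) ⊆ segment ℝ (γ a) (γ b) :=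
    (convex_segment _ _).segment_subset (left_mem_segment ℝ _ _) hγc
  obtain ⟨s, hs, hγs⟩ := exists_mem_segment_of_return hZ hZ₀ hγ (by linarith)
    (hre_seg _ hγc).symm fun z hz => hseg z (hsub hz)
  rcases le_or_gt s (a + δ) with hsδ | hsδ
  · exact (hmono (left_mem_Icc.2 (by linarith)) ⟨hs.1.le, hsδ⟩ hs.1).ne' (hre_seg _ (hsub hγs))
  · exact hs.2.not_ge (hmin ⟨⟨hsδ.le, by linarith [hs.2]⟩, hsub hγs⟩)

end Transversal

/-! ### Bounded nonvanishing planar fields have no recurrence -/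

section Transience

variable {V W : Type*} [NormedAddCommGroup V] [NormedSpace ℝ V]
  [NormedAddCommGroup W] [NormedSpace ℝ W]

/-- No integral curve of `Z` meets a suitable neighbourhood of `p` at two times more than one unit
apart. The bound `1` is an arbitrary normalization. -/
def IsTransient (Z : V → V) (p : V) : Prop :=
  ∃ U ∈ 𝓝 p, ∀ γ, IsIntegralCurve γ (fun _ => Z) → ∀ a b, γ a ∈ U → γ b ∈ U → b - a ≤ 1

theorem IsTransient.of_conj {Z : V → V} {p : V} (A : W ≃L[ℝ] V)
    (h : IsTransient (fun w => A.symm (Z (p + A w))) 0) : IsTransient Z p := by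
  obtain ⟨U, hU, hreturn⟩ := h
  have hchart : Continuous fun x => A.symm (x - p) := by fun_prop
  refine ⟨(fun x => A.symm (x - p)) ⁻¹' U, hchart.continuousAt.preimage_mem_nhds (by simpa),
    fun γ hγ a b ha hb => hreturn (fun t => A.symm (γ t - p)) (fun t => ?_) a b ha hb⟩
  simpa [Function.comp_def] using A.symm.hasFDerivAt.comp_hasDerivAt t ((hγ t).sub_const p)

theorem norm_sub_le_of_isIntegralCurve {Z : V → V} {γ : ℝ → V} {M : ℝ} (hM : ∀ x, ‖Z x‖ ≤ M)
    (hγ : IsIntegralCurve γ fun _ => Z) (s t : ℝ) : ‖γ t - γ s‖ ≤ M * |t - s| :=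
  convex_univ.norm_image_sub_le_of_norm_hasDerivWithin_le
    (fun u _ => (hγ u).hasDerivWithinAt) (fun u _ => hM (γ u)) (mem_univ s) (mem_univ t)

theorem exists_re_eq_zero_of_isIntegralCurve {Z : ℂ → ℂ} {γ : ℝ → ℂ} {c h M r a : ℝ}
    (hM : ∀ z, ‖Z z‖ ≤ M) (hc : ∀ z ∈ ball 0 r, c ≤ (Z z).re)
    (hγ : IsIntegralCurve γ fun _ => Z) (hh : 0 ≤ h) (hr : c * h + M * h ≤ r)
    (ha : ‖γ a‖ < c * h) :
    ∃ a', |a' - a| ≤ h ∧ (γ a').re = 0 ∧ γ a' ∈ ball 0 r := by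
  have hball : ∀ t ∈ Icc (a - h) (a + h), γ t ∈ ball 0 r := fun t ht => by
    have hM₀ : 0 ≤ M := (norm_nonneg _).trans (hM 0)
    have hta : |t - a| ≤ h := abs_le.2 ⟨by linarith [ht.1], by linarith [ht.2]⟩
    rw [mem_ball_zero_iff]
    calc ‖γ t‖ ≤ ‖γ t - γ a‖ + ‖γ a‖ := norm_le_norm_sub_add _ _
      _ ≤ M * |t - a| + ‖γ a‖ := by gcongr; exact norm_sub_le_of_isIntegralCurve hM hγ a t
      _ ≤ M * h + ‖γ a‖ := by gcongr
      _ < r := by linarith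
  have hderiv : ∀ t, HasDerivAt (fun t => (γ t).re) (Z (γ t)).re t := fun t =>
    Complex.reCLM.hasFDerivAt.comp_hasDerivAt t (hγ t)
  have hcont : ContinuousOn (fun t => (γ t).re) (Icc (a - h) (a + h)) := fun t _ =>
    (hderiv t).continuousAt.continuousWithinAt
  have hgrowth : ∀ s ∈ Icc (a - h) (a + h), ∀ t ∈ Icc (a - h) (a + h), s ≤ t →
      c * (t - s) ≤ (γ t).re - (γ s).re :=
    (convex_Icc _ _).mul_sub_le_image_sub_of_le_deriv hcont
      (fun t _ => (hderiv t).differentiableAt.differentiableWithinAt) fun t ht =>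
        (hderiv t).deriv ▸ hc _ (hball t (interior_subset ht))
  have hmid : a ∈ Icc (a - h) (a + h) := ⟨by linarith, by linarith⟩
  have hright := hgrowth a hmid (a + h) ⟨by linarith, le_rfl⟩ (by linarith)
  have hleft := hgrowth (a - h) ⟨le_rfl, by linarith⟩ a hmid (by linarith)
  obtain ⟨hneg, hpos⟩ := abs_lt.1 ((Complex.abs_re_le_norm (γ a)).trans_lt ha)
  obtain ⟨a', ha', hre⟩ := intermediate_value_Icc (by linarith) hcont
    (show (0 : ℝ) ∈ Icc _ _ from ⟨by linarith, by linarith⟩)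
  exact ⟨a', abs_le.2 ⟨by linarith [ha'.1], by linarith [ha'.2]⟩, hre, hball a' ha'⟩

theorem isTransient_zero_of_re_pos {Z : ℂ → ℂ} (hZ : ContDiff ℝ 1 Z) (hZ₀ : ∀ z, Z z ≠ 0)
    {M : ℝ} (hM : ∀ z, ‖Z z‖ ≤ M) (hre : 0 < (Z 0).re) : IsTransient Z 0 := by
  have hM₀ : 0 ≤ M := (norm_nonneg _).trans (hM 0)
  obtain ⟨c, hc, hcZ⟩ := exists_between hre
  obtain ⟨r, hr, hrc⟩ := Metric.eventually_nhds_iff_ball.1 <|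
    (Complex.continuous_re.comp hZ.continuous).continuousAt.eventually_const_lt hcZ
  set h := min (1 / 2) (r / (c + M))
  have hh₀ : 0 < h := lt_min (by norm_num) (by positivity)
  have hhr : c * h + M * h ≤ r := by
    rw [← add_mul, ← le_div_iff₀' (by positivity)]
    exact min_le_right _ _
  refine ⟨ball 0 (c * h), ball_mem_nhds _ (by positivity), fun γ hγ a b ha hb => ?_⟩
  have hslide := fun t => exists_re_eq_zero_of_isIntegralCurve (a := t) hM
    (fun z hz => (hrc z hz).le) hγ hh₀.le hhr
  obtain ⟨a', haa', ha're, ha'r⟩ := hslide a (mem_ball_zero_iff.1 ha)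
  obtain ⟨b', hbb', hb're, hb'r⟩ := hslide b (mem_ball_zero_iff.1 hb)
  have hno : ∀ s t, s < t → γ s ∈ ball 0 r → γ t ∈ ball 0 r → (γ s).re ≠ (γ t).re :=
    fun s t hst hs ht hre => not_return_to_transversal hZ hZ₀ hγ hst hre fun z hz =>
      hc.trans (hrc z ((convex_ball 0 r).segment_subset hs ht hz))
  have hab' : a' = b' := by
    rcases lt_trichotomy a' b' with hlt | heq | hgt
    · exact absurd (ha're.trans hb're.symm) (hno _ _ hlt ha'r hb'r)
    · exact heq
    · exact absurd (hb're.trans ha're.symm) (hno _ _ hgt hb'r ha'r)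
  have hh_half : h ≤ 1 / 2 := min_le_left _ _
  linarith [(abs_le.1 haa').2, (abs_le.1 hbb').1]

theorem exists_continuousLinearEquiv_one_eq {v : Euc 2} (hv : v ≠ 0) :
    ∃ A : ℂ ≃L[ℝ] Euc 2, A 1 = v := by
  obtain ⟨e⟩ : Nonempty (ℂ ≃ₗᵢ[ℝ] Euc 2) := ⟨Complex.orthonormalBasisOneI.repr⟩
  have hw : e.symm v ≠ 0 := by simpa using hv
  refine ⟨(ContinuousLinearEquiv.smulLeft (Units.mk0 _ hw)).trans e.toContinuousLinearEquiv, ?_⟩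
  have hone : Units.mk0 _ hw • (1 : ℂ) = e.symm v := mul_one _
  simp [hone]

theorem isTransient_of_forall_ne_zero {Z : Euc 2 → Euc 2} (hZ : ContDiff ℝ 1 Z)
    (hZ₀ : ∀ x, Z x ≠ 0) {M : ℝ} (hM : ∀ x, ‖Z x‖ ≤ M) (p : Euc 2) : IsTransient Z p := by
  obtain ⟨A, hA⟩ := exists_continuousLinearEquiv_one_eq (hZ₀ p)
  refine .of_conj A (isTransient_zero_of_re_pos (by fun_prop) (by simp [hZ₀])
    (M := ‖(A.symm : Euc 2 →L[ℝ] ℂ)‖ * M) (fun z => ?_) ?_)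
  · exact (A.symm : Euc 2 →L[ℝ] ℂ).le_opNorm_of_le (hM _)
  · simp [← hA]

end Transience

/-! ### Growth along integral curves of a transient field -/

section Growth

open MeasureTheory

variable {V : Type*} [NormedAddCommGroup V] [NormedSpace ℝ V] {Z : V → V} {φ : V → ℝ}

theorem volume_le_one_of_forall_sub_le {A : Set ℝ} (h : ∀ a ∈ A, ∀ b ∈ A, b - a ≤ 1) :
    volume A ≤ 1 := by
  refine (Real.volume_le_diam A).trans (Metric.ediam_le fun a ha b hb => ?_)
  rw [edist_dist, Real.dist_eq, ENNReal.ofReal_le_one, abs_le]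
  exact ⟨by linarith [h a ha b hb], h b hb a ha⟩

theorem exists_volume_preimage_le (hZ : ∀ p, IsTransient Z p) {K : Set V} (hK : IsCompact K) :
    ∃ N : ℕ, ∀ γ, IsIntegralCurve γ (fun _ => Z) → volume (γ ⁻¹' K) ≤ N := by
  choose U hU hreturn using hZ
  obtain ⟨F, -, hF⟩ := hK.elim_nhds_subcover U fun p _ => hU p
  refine ⟨F.card, fun γ hγ => ?_⟩
  have hcover : γ ⁻¹' K ⊆ ⋃ p ∈ F, γ ⁻¹' U p := by
    simpa only [preimage_iUnion₂] using preimage_mono hF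
  calc volume (γ ⁻¹' K) ≤ ∑ p ∈ F, volume (γ ⁻¹' U p) :=
        (measure_mono hcover).trans (measure_biUnion_finset_le F _)
    _ ≤ ∑ p ∈ F, 1 := Finset.sum_le_sum fun p _ => volume_le_one_of_forall_sub_le
        fun a ha b hb => hreturn p γ hγ a b ha hb
    _ = F.card := by simp

theorem intervalIntegral_indicator_one_le {A : Set ℝ} (hA : MeasurableSet A) {N : ℕ}
    (hAN : volume A ≤ N) {T : ℝ} (hT : 0 ≤ T) :
    IntervalIntegrable (A.indicator 1 : ℝ → ℝ) volume 0 T ∧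
      ∫ s in (0 : ℝ)..T, (A.indicator 1 : ℝ → ℝ) s ≤ N := by
  refine ⟨intervalIntegrable_iff.2 (continuous_one.integrableOn_uIoc.indicator hA), ?_⟩
  rw [intervalIntegral.integral_of_le hT, integral_indicator_one hA]
  exact ENNReal.toReal_le_of_le_ofReal N.cast_nonneg
    ((Measure.restrict_apply_le _ _).trans (by rwa [ENNReal.ofReal_natCast]))

theorem exists_sub_le_sub_of_isIntegralCurve (hZ : Continuous Z) (htransient : ∀ p, IsTransient Z p)
    (hφ : ContDiff ℝ 1 φ) (hφZ : ∀ᶠ x in cocompact V, 1 ≤ fderiv ℝ φ x (Z x)) :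
    ∃ B : ℝ, ∀ γ, IsIntegralCurve γ (fun _ => Z) → ∀ T, 0 ≤ T → T - B ≤ φ (γ T) - φ (γ 0) := by
  obtain ⟨K, hK, hKφ⟩ := mem_cocompact.1 hφZ
  obtain ⟨N, hN⟩ := exists_volume_preimage_le htransient hK
  have hcont : Continuous fun x => fderiv ℝ φ x (Z x) :=
    (hφ.continuous_fderiv one_ne_zero).clm_apply hZ
  obtain ⟨C, hC⟩ := hK.exists_bound_of_continuousOn hcont.continuousOn
  refine ⟨(1 + |C|) * N, fun γ hγ T hT => ?_⟩
  let A := γ ⁻¹' K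
  obtain ⟨hAint, hAle⟩ := intervalIntegral_indicator_one_le
    (hK.isClosed.preimage hγ.continuous).measurableSet (hN γ hγ) hT
  have hderiv : ∀ t, HasDerivAt (fun t => φ (γ t)) (fderiv ℝ φ (γ t) (Z (γ t))) t := fun t =>
    (hφ.differentiable one_ne_zero (γ t)).hasFDerivAt.comp_hasDerivAt t (hγ t)
  have hint := (hcont.comp hγ.continuous).intervalIntegrable (μ := volume) 0 T
  have hlow : ∀ s ∈ Icc 0 T,
      1 - (1 + |C|) * (A.indicator 1 : ℝ → ℝ) s ≤ fderiv ℝ φ (γ s) (Z (γ s)) := fun s _ => by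
    by_cases hs : s ∈ A
    · simpa [hs] using neg_le_of_abs_le ((hC _ hs).trans (le_abs_self C))
    · simpa [hs] using hKφ hs
  calc T - (1 + |C|) * N ≤ T - (1 + |C|) * ∫ s in (0 : ℝ)..T, (A.indicator 1 : ℝ → ℝ) s := by gcongr
    _ = ∫ s in (0 : ℝ)..T, (1 - (1 + |C|) * (A.indicator 1 : ℝ → ℝ) s) := by
      rw [intervalIntegral.integral_sub intervalIntegrable_const (hAint.const_mul _),
        intervalIntegral.integral_const_mul, intervalIntegral.integral_const, sub_zero, smul_eq_mul,
        mul_one]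
    _ ≤ ∫ s in (0 : ℝ)..T, fderiv ℝ φ (γ s) (Z (γ s)) := intervalIntegral.integral_mono_on hT
      (intervalIntegrable_const.sub (hAint.const_mul _)) hint hlow
    _ = φ (γ T) - φ (γ 0) :=
      intervalIntegral.integral_eq_sub_of_hasDerivAt (fun t _ => hderiv t) hint

theorem hasDerivAt_integral_comp_add_left {u : ℝ → ℝ} (hu : Continuous u) (T : ℝ) :
    HasDerivAt (fun h => ∫ s in (0 : ℝ)..T, u (h + s)) (u T - u 0) 0 := by
  have hprim : ∀ t, HasDerivAt (fun h => ∫ s in (0 : ℝ)..h, u s) (u t) t := fun t =>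
    (hu.integral_hasStrictDerivAt 0 t).hasDerivAt
  have hT : HasDerivAt (fun h => ∫ s in (0 : ℝ)..h + T, u s) (u T) 0 :=
    HasDerivAt.comp_add_const 0 T (by simpa using hprim T)
  refine (hT.sub (hprim 0)).congr_of_eventuallyEq (.of_forall fun h => ?_)
  simp [intervalIntegral.integral_interval_sub_left (hu.intervalIntegrable _ _)
    (hu.intervalIntegrable _ _)]

variable [FiniteDimensional ℝ V]

theorem exists_half_le_fderiv_apply (hZ : ContDiff ℝ 1 Z) {M : ℝ≥0} (hM : ∀ x, ‖Z x‖ ≤ M)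
    (htransient : ∀ p, IsTransient Z p) (hφ : ContDiff ℝ 1 φ)
    (hφZ : ∀ᶠ x in cocompact V, 1 ≤ fderiv ℝ φ x (Z x)) :
    ∃ τ κ : V → ℝ, ContDiff ℝ 1 τ ∧ ContDiff ℝ 1 κ ∧ (∀ x, 1 / 2 ≤ κ x) ∧
      ∀ x, fderiv ℝ τ x (Z x) = κ x := by
  obtain ⟨B, hB⟩ := exists_sub_le_sub_of_isIntegralCurve hZ.continuous htransient hφ hφZ
  obtain ⟨Φ, hΦ₀, hΦ, hΦC⟩ := exists_flow hZ hM
  set T := 2 * |B| + 1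
  have hT : 0 < T := by positivity
  have hφΦ : ContDiff ℝ 1 fun p : V × ℝ => φ (Φ p.1 p.2) := hφ.comp hΦC
  have hτ : ContDiff ℝ 1 fun x => (∫ s in (0 : ℝ)..T, φ (Φ x s)) / T :=
    (contDiff_one_parametric_intervalIntegral hφΦ 0 T).div_const _
  have hφT : ContDiff ℝ 1 fun x => φ (Φ x T) := hφΦ.comp (contDiff_id.prodMk contDiff_const)
  refine ⟨_, fun x => (φ (Φ x T) - φ x) / T, hτ, (hφT.sub hφ).div_const T,
    fun x => ?_, fun x => ?_⟩
  · have hgrowth := hB _ (hΦ x) T hT.le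
    rw [hΦ₀] at hgrowth
    rw [le_div_iff₀ hT]
    linarith [le_abs_self B]
  · have hshift := (hasDerivAt_integral_comp_add_left
      (hφ.continuous.comp (hΦ x).continuous) T).div_const T
    simp only [Function.comp_def, flow_add hZ hΦ₀ hΦ, hΦ₀] at hshift
    simpa only [hΦ₀] using fderiv_apply_eq_of_hasDerivAt_comp (hΦ x) (t := 0)
      (hτ.differentiable one_ne_zero _) hshift

theorem exists_pos_smul_fderiv_apply_eq_one (hZ : ContDiff ℝ 1 Z) {M : ℝ≥0} (hM : ∀ x, ‖Z x‖ ≤ M)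
    (htransient : ∀ p, IsTransient Z p) (hφ : ContDiff ℝ 1 φ)
    (hφZ : ∀ᶠ x in cocompact V, 1 ≤ fderiv ℝ φ x (Z x)) :
    ∃ τ ρ : V → ℝ, ContDiff ℝ 1 τ ∧ ContDiff ℝ 1 ρ ∧ (∀ x, 0 < ρ x) ∧ (∀ x, ρ x ≤ 2) ∧
      ∀ x, fderiv ℝ τ x (ρ x • Z x) = 1 := by
  obtain ⟨τ, κ, hτ, hκ, hκ_half, hτκ⟩ := exists_half_le_fderiv_apply hZ hM htransient hφ hφZ
  have hκ_pos : ∀ x, 0 < κ x := fun x => one_half_pos.trans_le (hκ_half x)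
  refine ⟨τ, fun x => (κ x)⁻¹, hτ, hκ.inv fun x => (hκ_pos x).ne', fun x => inv_pos.2 (hκ_pos x),
    fun x => inv_le_of_inv_le₀ two_pos (by simpa using hκ_half x), fun x => ?_⟩
  rw [map_smul, hτκ, smul_eq_mul, inv_mul_cancel₀ (hκ_pos x).ne']

end Growth

section Gradient

variable {n : ℕ} {f g : Euc n → Euc n}

theorem IsGradient.of_hasGradientAt {φ : Euc n → ℝ} (hf : Continuous f)
    (hφ : ∀ x, HasGradientAt φ (f x) x) : IsGradient f := by
  refine ⟨φ, contDiff_one_iff_fderiv.2 ⟨fun x => (hφ x).differentiableAt, ?_⟩,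
    fun x => (hφ x).gradient⟩
  rw [funext fun x => (hφ x).hasFDerivAt.fderiv]
  exact (InnerProductSpace.toDual ℝ (Euc n)).continuous.comp hf

theorem IsGradient.exists_contDiff (hf : IsGradient f) :
    ∃ φ : Euc n → ℝ, ContDiff ℝ 1 φ ∧ ∀ x, HasGradientAt φ (f x) x := by
  obtain ⟨φ, hφ, hgrad⟩ := hf
  exact ⟨φ, hφ, fun x => hgrad x ▸ (hφ.differentiable one_ne_zero x).hasGradientAt⟩

theorem IsGradient.continuous (hf : IsGradient f) : Continuous f := by
  obtain ⟨φ, hφ, hgrad⟩ := hf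
  rw [← funext hgrad]
  exact (InnerProductSpace.toDual ℝ (Euc n)).symm.continuous.comp (hφ.continuous_fderiv one_ne_zero)

theorem IsGradient.smul_add_smul (hf : IsGradient f) (hg : IsGradient g) (a b : ℝ) :
    IsGradient fun x => a • f x + b • g x := by
  have hcont : Continuous fun x => a • f x + b • g x :=
    (hf.continuous.const_smul a).add (hg.continuous.const_smul b)
  obtain ⟨φ, -, hφ⟩ := hf.exists_contDiff
  obtain ⟨ψ, -, hψ⟩ := hg.exists_contDiff
  refine .of_hasGradientAt (φ := fun x => a * φ x + b * ψ x) hcont fun x => ?_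
  rw [hasGradientAt_iff_hasFDerivAt, map_add, map_smul, map_smul]
  exact ((hφ x).hasFDerivAt.const_mul a).add ((hψ x).hasFDerivAt.const_mul b)

end Gradient

/-! ### Gradients of dilated potentials -/

section Dilation

open MeasureTheory

/-- The function `x ↦ (τ (t • x) - τ 0) / t`, written so as to make sense also for `t = 0`. -/
def dilatedPotential {V : Type*} [NormedAddCommGroup V] [NormedSpace ℝ V] (τ : V → ℝ) (t : ℝ)
    (x : V) : ℝ :=
  ∫ s in (0 : ℝ)..1, fderiv ℝ τ ((s * t) • x) x

variable {V : Type*} [NormedAddCommGroup V] [NormedSpace ℝ V] {τ : V → ℝ}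

theorem continuous_dilatedPotential (hτ : ContDiff ℝ 1 τ) :
    Continuous fun p : ℝ × V => dilatedPotential τ p.1 p.2 := by
  have := hτ.continuous_fderiv one_ne_zero
  refine intervalIntegral.continuous_parametric_intervalIntegral_of_continuous'
    (f := fun (p : ℝ × V) s => fderiv ℝ τ ((s * p.1) • p.2) p.2) ?_ 0 1
  simp only [Function.uncurry_def]
  fun_prop

theorem dilatedPotential_of_ne_zero (hτ : ContDiff ℝ 1 τ) {t : ℝ} (ht : t ≠ 0) (x : V) :
    dilatedPotential τ t x = t⁻¹ * (τ (t • x) - τ 0) := by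
  have := hτ.continuous_fderiv one_ne_zero
  have hderiv : ∀ s, HasDerivAt (fun s : ℝ => t⁻¹ * τ ((s * t) • x))
      (fderiv ℝ τ ((s * t) • x) x) s := fun s => by
    have hpath : HasDerivAt (fun s : ℝ => (s * t) • x) (t • x) s := by
      simpa using (hasDerivAt_mul_const t).smul_const x
    simpa [inv_mul_cancel_left₀ ht] using
      ((hτ.differentiable one_ne_zero _).hasFDerivAt.comp_hasDerivAt s hpath).const_mul t⁻¹
  rw [dilatedPotential, intervalIntegral.integral_eq_sub_of_hasDerivAt (fun s _ => hderiv s)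
    (Continuous.intervalIntegrable (by fun_prop) _ _)]
  simp [mul_sub]

theorem hasFDerivAt_dilatedPotential (hτ : ContDiff ℝ 1 τ) (t : ℝ) (x : V) :
    HasFDerivAt (dilatedPotential τ t) (fderiv ℝ τ (t • x)) x := by
  rcases eq_or_ne t 0 with rfl | ht
  · have hzero : dilatedPotential τ 0 = fderiv ℝ τ 0 := by ext y; simp [dilatedPotential]
    simpa [hzero] using (fderiv ℝ τ 0).hasFDerivAt
  · rw [funext (dilatedPotential_of_ne_zero hτ ht)]
    have hcomp := ((hτ.differentiable one_ne_zero (t • x)).hasFDerivAt.comp x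
      ((hasFDerivAt_id x).const_smul t)).sub_const (τ 0) |>.const_mul t⁻¹
    exact hcomp.congr_fderiv (by ext v; simp [ht])

theorem dilatedPotential_integralCurve (hτ : ContDiff ℝ 1 τ) {Z : V → V}
    (hτZ : ∀ x, fderiv ℝ τ x (Z x) = 1) {t : ℝ} {γ : ℝ → V}
    (hγ : IsIntegralCurve γ fun _ x => Z (t • x)) (h : ℝ) :
    dilatedPotential τ t (γ h) = dilatedPotential τ t (γ 0) + h := by
  have hderiv : ∀ s, HasDerivAt (fun s => dilatedPotential τ t (γ s) - s) 0 s := fun s =>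
    (((hasFDerivAt_dilatedPotential hτ t (γ s)).comp_hasDerivAt s (hγ s)).sub
      (hasDerivAt_id s)).congr_deriv (by rw [hτZ, sub_self])
  have hconst := is_const_of_deriv_eq_zero (fun s => (hderiv s).differentiableAt)
    (fun s => (hderiv s).deriv) h 0
  linarith

variable {E : Type*} [NormedAddCommGroup E] [InnerProductSpace ℝ E] [FiniteDimensional ℝ E]

theorem exists_dilation_family_hasFDerivAt {Z : E → E} (hZ : ContDiff ℝ 1 Z) {M : ℝ≥0}
    (hM : ∀ x, ‖Z x‖ ≤ M) {τ : E → ℝ} (hτ : ContDiff ℝ 1 τ) (hτZ : ∀ x, fderiv ℝ τ x (Z x) = 1) :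
    ∃ (G : ℝ → E → ℝ) (G' : ℝ → E → E →L[ℝ] ℝ), (Continuous fun p : ℝ × E => G' p.1 p.2) ∧
      (∀ t x, HasFDerivAt (G t) (G' t x) x) ∧ ∀ t x, G' t x (Z (t • x)) = 1 + ‖x‖ ^ 2 := by
  have hY : ContDiff ℝ 1 fun p : ℝ × E => Z (p.1 • p.2) := hZ.comp (contDiff_fst.smul contDiff_snd)
  obtain ⟨Φ, hΦ₀, hΦ, hΦC⟩ := exists_parametric_flow hY fun _ _ => hM _
  have hΦ_add : ∀ t x s u, Φ t x (s + u) = Φ t (Φ t x s) u := fun t =>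
    flow_add (hY.comp (contDiff_prodMk_right t)) (hΦ₀ t) (hΦ t)
  set σ := dilatedPotential τ
  set w : ℝ → E → ℝ → ℝ := fun t x v => 1 + ‖Φ t x v‖ ^ 2 with hw
  set H : (ℝ × E) × ℝ → ℝ := fun p => ∫ v in (0 : ℝ)..p.2, w p.1.1 p.1.2 v with hH
  have hHC : ContDiff ℝ 1 H := contDiff_one_parametric_primitive
    (F := fun q : (ℝ × E) × ℝ => w q.1.1 q.1.2 q.2) <| contDiff_const.add <| ContDiff.norm_sq ℝ <|
      hΦC.comp (contDiff_fst.fst.prodMk (contDiff_fst.snd.prodMk contDiff_snd))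
  set G' : ℝ → E → E →L[ℝ] ℝ := fun t x => -(fderiv ℝ H ((t, x), -σ t x)).comp
    ((ContinuousLinearMap.inr ℝ ℝ E).prod (-fderiv ℝ τ (t • x)))
  have hG : ∀ t x, HasFDerivAt (fun x => -H ((t, x), -σ t x)) (G' t x) x := fun t x =>
    ((hHC.differentiable one_ne_zero _).hasFDerivAt.comp x ((hasFDerivAt_prodMk_right t x).prodMk
      (hasFDerivAt_dilatedPotential hτ t x).neg)).neg
  refine ⟨fun t x => -H ((t, x), -σ t x), G', ?_, hG, fun t x => ?_⟩
  · have hσ := continuous_dilatedPotential hτ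
    have hH' : Continuous fun p : ℝ × E => fderiv ℝ H (p, -σ p.1 p.2) :=
      (hHC.continuous_fderiv one_ne_zero).comp (continuous_id.prodMk hσ.neg)
    have hτ' := (hτ.continuous_fderiv one_ne_zero).comp (continuous_smul (M := ℝ) (X := E))
    exact (hH'.clm_comp <| (ContinuousLinearMap.prodL ℝ (𝕜 := ℝ)).continuous.comp <|
      continuous_const.prodMk hτ'.neg).neg
  · have hw_cont : Continuous (w t x) := by
      have := (hΦ t x).continuous
      fun_prop
    have hflow : ∀ h, -H ((t, Φ t x h), -σ t (Φ t x h)) = ∫ v in (-σ t x)..h, w t x v := fun h => by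
      simp only [hH, hw, ← hΦ_add, σ, dilatedPotential_integralCurve hτ hτZ (hΦ t x), hΦ₀]
      rw [intervalIntegral.integral_comp_add_left (fun v => 1 + ‖Φ t x v‖ ^ 2) h,
        ← intervalIntegral.integral_symm]
      simp
    have hprim : HasDerivAt (fun h => -H ((t, Φ t x h), -σ t (Φ t x h))) (w t x 0) 0 := by
      simpa only [hflow] using (hw_cont.integral_hasStrictDerivAt (-σ t x) 0).hasDerivAt
    simpa only [hw, hΦ₀] using ((hG t (Φ t x 0)).comp_hasDerivAt 0 (hΦ t x 0)).unique hprim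

theorem exists_dilation_family {n : ℕ} {Z : Euc n → Euc n} (hZ : ContDiff ℝ 1 Z) {M : ℝ≥0}
    (hM : ∀ x, ‖Z x‖ ≤ M) {τ : Euc n → ℝ} (hτ : ContDiff ℝ 1 τ)
    (hτZ : ∀ x, fderiv ℝ τ x (Z x) = 1) :
    ∃ g : ℝ → Euc n → Euc n, (Continuous fun p : ℝ × Euc n => g p.1 p.2) ∧
      (∀ t, IsGradient (g t)) ∧ ∀ t x, inner ℝ (g t x) (Z (t • x)) = 1 + ‖x‖ ^ 2 := by
  obtain ⟨G, G', hG', hG, hGZ⟩ := exists_dilation_family_hasFDerivAt hZ hM hτ hτZ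
  have hg : Continuous fun p : ℝ × Euc n => (InnerProductSpace.toDual ℝ _).symm (G' p.1 p.2) :=
    (InnerProductSpace.toDual ℝ (Euc n)).symm.continuous.comp hG'
  exact ⟨_, hg, fun t => .of_hasGradientAt (hg.comp (.prodMk_right t)) fun x =>
    (hG t x).hasGradientAt, fun t x => by simpa using hGZ t x⟩

end Dilation

/-! ### Proper gradient homotopies -/

section Homotopy

variable {n : ℕ} {f g k : Euc n → Euc n} {Z : Euc n → Euc n}

theorem IsProper.eventually_le_norm (hf : IsProper f) (C : ℝ) :
    ∀ᶠ x in cocompact (Euc n), C ≤ ‖f x‖ :=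
  mem_cocompact.2 ⟨_, hf _ (isCompact_closedBall 0 C), fun x hx =>
    (not_le.1 fun hle => hx (by simpa using hle)).le⟩

theorem IsProper.of_eventually_le_norm (hf : Continuous f)
    (h : ∀ C, ∀ᶠ x in cocompact (Euc n), C ≤ ‖f x‖) : IsProper f := fun K hK => by
  obtain ⟨C, hC⟩ := hK.isBounded.exists_norm_le
  obtain ⟨L, hL, hLlarge⟩ := mem_cocompact.1 (h (C + 1))
  refine hL.of_isClosed_subset (hK.isClosed.preimage hf) fun x hx => by_contra fun hxL => ?_
  have : C + 1 ≤ ‖f x‖ := hLlarge hxL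
  linarith [hC _ hx]

theorem isProperGradientHomotopy_iff {h : ℝ → Euc n → Euc n} :
    IsProperGradientHomotopy h ↔
      ContinuousOn (fun p : ℝ × Euc n => h p.1 p.2) (Icc 0 1 ×ˢ univ) ∧
      (∀ t ∈ Icc (0 : ℝ) 1, IsGradient (h t)) ∧
      ∀ C, ∀ᶠ x in cocompact (Euc n), ∀ t ∈ Icc (0 : ℝ) 1, C ≤ ‖h t x‖ := by
  refine and_congr_right fun hcont => and_congr_right fun _ => ⟨fun hproper C => ?_,
    fun hlarge K hK => ?_⟩
  · refine mem_cocompact.2 ⟨_, (hproper _ (isCompact_closedBall 0 C)).image continuous_snd,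
      fun x hx t ht => ?_⟩
    by_contra! hlt
    exact hx ⟨(t, x), ⟨ht, by simpa using hlt.le⟩, rfl⟩
  · obtain ⟨C, hC⟩ := hK.isBounded.exists_norm_le
    obtain ⟨L, hL, hLlarge⟩ := mem_cocompact.1 (hlarge (C + 1))
    have hclosed := hcont.preimage_isClosed_of_isClosed (isClosed_Icc.prod isClosed_univ)
      hK.isClosed
    have heq : {p : ℝ × Euc n | p.1 ∈ Icc (0 : ℝ) 1 ∧ h p.1 p.2 ∈ K} =
        Icc 0 1 ×ˢ univ ∩ (fun p : ℝ × Euc n => h p.1 p.2) ⁻¹' K := by ext; simp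
    refine heq ▸ ((isCompact_Icc (a := (0 : ℝ)) (b := 1)).prod hL).of_isClosed_subset hclosed ?_
    rintro ⟨t, x⟩ ⟨⟨ht, -⟩, hx⟩
    refine ⟨ht, by_contra fun hxL => ?_⟩
    linarith [hLlarge hxL t ht, hC _ hx]

theorem ProperGradientHomotopic.symm (hfg : ProperGradientHomotopic f g) :
    ProperGradientHomotopic g f := by
  obtain ⟨h, hh, rfl, rfl⟩ := hfg
  obtain ⟨hcont, hgrad, hlarge⟩ := isProperGradientHomotopy_iff.1 hh
  have hrev : ∀ t ∈ Icc (0 : ℝ) 1, 1 - t ∈ Icc (0 : ℝ) 1 := fun t ht =>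
    ⟨by linarith [ht.2], by linarith [ht.1]⟩
  refine ⟨fun t => h (1 - t), isProperGradientHomotopy_iff.2 ⟨?_, fun t ht => hgrad _ (hrev t ht),
    fun C => (hlarge C).mono fun x hx t ht => hx _ (hrev t ht)⟩, by simp, by simp⟩
  exact hcont.comp (f := fun p : ℝ × Euc n => (1 - p.1, p.2)) (by fun_prop)
    fun p hp => ⟨hrev _ hp.1, trivial⟩

theorem ProperGradientHomotopic.trans (hfg : ProperGradientHomotopic f g)
    (hgk : ProperGradientHomotopic g k) : ProperGradientHomotopic f k := by
  obtain ⟨h₁, hh₁, rfl, rfl⟩ := hfg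
  obtain ⟨h₂, hh₂, hglue, rfl⟩ := hgk
  obtain ⟨hcont₁, hgrad₁, hlarge₁⟩ := isProperGradientHomotopy_iff.1 hh₁
  obtain ⟨hcont₂, hgrad₂, hlarge₂⟩ := isProperGradientHomotopy_iff.1 hh₂
  set h : ℝ → Euc n → Euc n := fun t x => h₁ (min (2 * t) 1) x + h₂ (max (2 * t - 1) 0) x - h₁ 1 x
  have hcases : ∀ t ∈ Icc (0 : ℝ) 1, (∃ s ∈ Icc (0 : ℝ) 1, h t = h₁ s) ∨
      ∃ s ∈ Icc (0 : ℝ) 1, h t = h₂ s := fun t ht => by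
    rcases le_total (2 * t) 1 with hle | hge
    · refine .inl ⟨2 * t, ⟨by linarith [ht.1], hle⟩, funext fun x => ?_⟩
      simp [h, min_eq_left hle, max_eq_right (sub_nonpos.2 hle), hglue]
    · refine .inr ⟨2 * t - 1, ⟨by linarith, by linarith [ht.2]⟩, funext fun x => ?_⟩
      simp [h, min_eq_right hge, max_eq_left (sub_nonneg.2 hge)]
  refine ⟨h, isProperGradientHomotopy_iff.2 ⟨?_, fun t ht => ?_, fun C => ?_⟩, ?_, ?_⟩
  · have hmid := (hgrad₁ 1 (right_mem_Icc.2 zero_le_one)).continuous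
    refine ((hcont₁.comp (f := fun p : ℝ × Euc n => (min (2 * p.1) 1, p.2)) (by fun_prop) ?_).add
      (hcont₂.comp (f := fun p : ℝ × Euc n => (max (2 * p.1 - 1) 0, p.2)) (by fun_prop) ?_)).sub
      (hmid.comp continuous_snd).continuousOn
    · exact fun p hp => ⟨⟨le_min (by linarith [hp.1.1]) zero_le_one, min_le_right _ _⟩, trivial⟩
    · exact fun p hp => ⟨⟨le_max_right _ _, max_le (by linarith [hp.1.2]) zero_le_one⟩, trivial⟩
  · obtain ⟨s, hs, hts⟩ | ⟨s, hs, hts⟩ := hcases t ht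
    exacts [hts ▸ hgrad₁ s hs, hts ▸ hgrad₂ s hs]
  · filter_upwards [hlarge₁ C, hlarge₂ C] with x hx₁ hx₂ t ht
    obtain ⟨s, hs, hts⟩ | ⟨s, hs, hts⟩ := hcases t ht
    exacts [hts ▸ hx₁ s hs, hts ▸ hx₂ s hs]
  · ext1 x; simp [h, hglue]
  · ext1 x; norm_num [h]

/-- The component of `f` in the direction of the field `Z` tends to infinity at infinity; the
inequality is multiplied by `‖Z x‖` to avoid division. -/
def IsCoerciveAlong (f Z : Euc n → Euc n) : Prop :=
  ∀ C : ℝ, ∀ᶠ x in cocompact (Euc n), C * ‖Z x‖ ≤ inner ℝ (f x) (Z x)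

theorem IsCoerciveAlong.smul (h : IsCoerciveAlong f Z) {ρ : Euc n → ℝ} (hρ : ∀ x, 0 ≤ ρ x) :
    IsCoerciveAlong f fun x => ρ x • Z x := fun C => by
  filter_upwards [h C] with x hx
  rw [norm_smul, Real.norm_of_nonneg (hρ x), inner_smul_right, mul_left_comm]
  exact mul_le_mul_of_nonneg_left hx (hρ x)

theorem le_norm_of_mul_norm_le_inner {E : Type*} [NormedAddCommGroup E] [InnerProductSpace ℝ E]
    {y z : E} {C : ℝ} (hz : z ≠ 0) (h : C * ‖z‖ ≤ inner ℝ y z) : C ≤ ‖y‖ :=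
  le_of_mul_le_mul_right (h.trans (real_inner_le_norm y z)) (norm_pos_iff.2 hz)

theorem ProperGradientHomotopic.of_isCoerciveAlong (hf : IsGradient f) (hg : IsGradient g)
    (hZ₀ : ∀ x, Z x ≠ 0) (hfZ : IsCoerciveAlong f Z) (hgZ : IsCoerciveAlong g Z) :
    ProperGradientHomotopic f g := by
  have hfc := hf.continuous
  have hgc := hg.continuous
  refine ⟨fun t x => (1 - t) • f x + t • g x, isProperGradientHomotopy_iff.2
    ⟨by fun_prop, fun t _ => hf.smul_add_smul hg _ _, fun C => ?_⟩, by simp, by simp⟩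
  filter_upwards [hfZ C, hgZ C] with x hfx hgx t ht
  refine le_norm_of_mul_norm_le_inner (hZ₀ x) ?_
  rw [inner_add_left, inner_smul_left, inner_smul_left]
  calc C * ‖Z x‖ = (1 - t) * (C * ‖Z x‖) + t * (C * ‖Z x‖) := by ring
    _ ≤ _ := add_le_add (mul_le_mul_of_nonneg_left hfx (by linarith [ht.2]))
      (mul_le_mul_of_nonneg_left hgx ht.1)

theorem exists_properGradientHomotopic_isCoerciveAlong_of_fderiv_apply_eq_one
    (hf : IsGradient f) (hZ : ContDiff ℝ 1 Z) {M : ℝ≥0} (hM : ∀ x, ‖Z x‖ ≤ M)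
    (hfZ : IsCoerciveAlong f Z) {τ : Euc n → ℝ} (hτ : ContDiff ℝ 1 τ)
    (hτZ : ∀ x, fderiv ℝ τ x (Z x) = 1) :
    ∃ g, IsGradient g ∧ ProperGradientHomotopic f g ∧ IsCoerciveAlong g fun _ => Z 0 := by
  have hZ₀ : ∀ x, Z x ≠ 0 := fun x hx => by simpa [hx] using hτZ x
  obtain ⟨g, hg, hgrad, hgZ⟩ := exists_dilation_family hZ hM hτ hτZ
  have hlarge : ∀ C, ∀ᶠ x in cocompact (Euc n), ∀ t,
      C * ‖Z (t • x)‖ ≤ inner ℝ (g t x) (Z (t • x)) := fun C => by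
    filter_upwards [(tendsto_norm_cocompact_atTop (E := Euc n)).eventually_ge_atTop (|C| * M)]
      with x hx t
    calc C * ‖Z (t • x)‖ ≤ |C| * M := by
          gcongr
          exacts [le_abs_self C, hM _]
      _ ≤ 1 + ‖x‖ ^ 2 := by nlinarith [sq_nonneg (‖x‖ - 1)]
      _ = inner ℝ (g t x) (Z (t • x)) := (hgZ t x).symm
  have hdilate : ProperGradientHomotopic (g 0) (g 1) := ⟨g, isProperGradientHomotopy_iff.2
    ⟨hg.continuousOn, fun t _ => hgrad t, fun C => (hlarge C).mono fun x hx t _ =>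
      le_norm_of_mul_norm_le_inner (hZ₀ _) (hx t)⟩, rfl, rfl⟩
  have hline : ProperGradientHomotopic f (g 1) := .of_isCoerciveAlong hf (hgrad 1) hZ₀ hfZ
    fun C => (hlarge C).mono fun x hx => by simpa using hx 1
  exact ⟨g 0, hgrad 0, hline.trans hdilate.symm,
    fun C => (hlarge C).mono fun x hx => by simpa using hx 0⟩

theorem exists_properGradientHomotopic_isCoerciveAlong_const (hf : IsGradient f)
    (hZ : ContDiff ℝ 1 Z) (hZ₁ : ∀ x, ‖Z x‖ = 1) (htransient : ∀ p, IsTransient Z p)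
    (hfZ : IsCoerciveAlong f Z) :
    ∃ g, IsGradient g ∧ ProperGradientHomotopic f g ∧ IsCoerciveAlong g fun _ => Z 0 := by
  obtain ⟨φ, hφ, hφf⟩ := hf.exists_contDiff
  have hφZ : ∀ᶠ x in cocompact (Euc n), 1 ≤ fderiv ℝ φ x (Z x) := by
    filter_upwards [hfZ 1] with x hx
    simpa [(hφf x).hasFDerivAt.fderiv, hZ₁] using hx
  obtain ⟨τ, ρ, hτ, hρ, hρ₀, hρ₂, hτZ⟩ := exists_pos_smul_fderiv_apply_eq_one hZ (M := 1)
    (fun x => (hZ₁ x).le) htransient hφ hφZ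
  obtain ⟨g, hg, hfg, hgZ⟩ := exists_properGradientHomotopic_isCoerciveAlong_of_fderiv_apply_eq_one
    hf (hρ.smul hZ) (M := 2)
    (fun x => by simpa [norm_smul, hZ₁, abs_of_pos (hρ₀ x)] using hρ₂ x)
    (hfZ.smul fun x => (hρ₀ x).le) hτ hτZ
  refine ⟨g, hg, hfg, ?_⟩
  simpa [inv_smul_smul₀ (hρ₀ 0).ne'] using hgZ.smul fun _ => (inv_pos.2 (hρ₀ 0)).le

end Homotopy

/-! ### Unit fields along proper planar maps with winding number zero -/

section UnitField

theorem half_norm_exp_le_inner_exp_mul_I {w : ℂ} {α : ℝ} (h : |α - w.im| ≤ 1) :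
    ‖Complex.exp w‖ / 2 ≤ inner ℝ (Complex.exp w) (Complex.exp (α * Complex.I)) := by
  have hcos : 1 / 2 ≤ Real.cos (α - w.im) := by
    have := Real.one_sub_sq_div_two_le_cos (x := α - w.im)
    nlinarith [abs_le.1 h]
  have hinner : inner ℝ (Complex.exp w) (Complex.exp (α * Complex.I)) =
      Real.exp w.re * Real.cos (α - w.im) := by
    rw [Complex.inner, ← Complex.exp_conj, ← Complex.exp_add, Complex.exp_re]
    simp [sub_eq_add_neg, add_comm]
  rw [hinner, Complex.norm_exp, div_eq_mul_one_div]
  gcongr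

theorem exists_unitField_isCoerciveAlong {f : Euc 2 → Euc 2} (hf : IsProper f)
    (e : ℂ ≃ₗᵢ[ℝ] Euc 2) {η : ℂ → ℂ} (hη : Continuous η)
    (hfη : ∀ᶠ z in cocompact ℂ, e.symm (f (e z)) = Complex.exp (η z)) :
    ∃ Z : Euc 2 → Euc 2, ContDiff ℝ 1 Z ∧ (∀ x, ‖Z x‖ = 1) ∧ Z 0 = e 1 ∧ IsCoerciveAlong f Z := by
  obtain ⟨α, hα, hαη, -⟩ := Continuous.exists_contDiff_approx 1 (ε := fun _ => (1 : ℝ))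
    (Complex.continuous_im.comp hη) continuous_const fun _ => one_pos
  let β : ℂ → ℝ := fun z => Real.smoothTransition (‖z‖ ^ 2) * α z
  have hβ : ContDiff ℝ 1 β := (Real.smoothTransition.contDiff.comp (contDiff_norm_sq ℝ)).mul hα
  refine ⟨fun x => e (Complex.exp (β (e.symm x) * Complex.I)), ?_, fun x => ?_, ?_, fun C => ?_⟩
  · have hcont : ContDiff ℝ 1 fun z => Complex.exp (β z * Complex.I) :=
      ((Complex.ofRealCLM.contDiff.comp hβ).mul contDiff_const).cexp
    exact e.contDiff.comp (hcont.comp e.symm.contDiff)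
  · rw [e.norm_map, Complex.norm_exp_ofReal_mul_I]
  · simp [β]
  · have hlarge : ∀ᶠ z in cocompact ℂ, 1 ≤ ‖z‖ :=
      (tendsto_norm_cocompact_atTop (E := ℂ)).eventually_ge_atTop 1
    have hesymm : Tendsto e.symm (cocompact (Euc 2)) (cocompact ℂ) :=
      e.symm.toHomeomorph.isClosedEmbedding.tendsto_cocompact
    filter_upwards [hesymm.eventually hlarge, hesymm.eventually hfη, hf.eventually_le_norm (2 * C)]
      with x hx₁ hxη hxC
    rw [e.apply_symm_apply] at hxη
    have hβα : β (e.symm x) = α (e.symm x) := by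
      simp only [β, Real.smoothTransition.one_of_one_le (one_le_pow₀ hx₁), one_mul]
    have hinner := half_norm_exp_le_inner_exp_mul_I (hβα ▸ (hαη (e.symm x)).le)
    rw [← hxη, e.symm.norm_map, ← e.inner_map_map, e.apply_symm_apply] at hinner
    rw [e.norm_map, Complex.norm_exp_ofReal_mul_I]
    linarith

end UnitField

/-! ### Brouwer degree of planar maps -/

namespace DegreeTheory

section Axioms

variable {n : ℕ} (D : DegreeTheory n) {f : Euc n → Euc n} {Ω Ω₁ : Set (Euc n)}

theorem deg_empty (f : Euc n → Euc n) : D.deg f ∅ = 0 := by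
  have := D.additive f ∅ ∅ ∅ isOpen_empty Bornology.isBounded_empty isOpen_empty isOpen_empty
    subset_rfl subset_rfl disjoint_bot_left (by simp) (by simp)
  omega

theorem deg_eq_of_subset (hΩ : IsOpen Ω) (hbdd : Bornology.IsBounded Ω) (hΩ₁ : IsOpen Ω₁)
    (hsub : Ω₁ ⊆ Ω) (hf : ContinuousOn f (closure Ω)) (hf₀ : ∀ x ∈ closure Ω \ Ω₁, f x ≠ 0) :
    D.deg f Ω = D.deg f Ω₁ := by
  rw [D.additive f Ω Ω₁ ∅ hΩ hbdd hΩ₁ isOpen_empty hsub (empty_subset _) disjoint_bot_right hf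
    (by rwa [union_empty]), D.deg_empty, add_zero]

theorem deg_eq_zero (hΩ : IsOpen Ω) (hbdd : Bornology.IsBounded Ω) (hf : ContinuousOn f (closure Ω))
    (hf₀ : ∀ x ∈ closure Ω, f x ≠ 0) : D.deg f Ω = 0 :=
  (D.deg_eq_of_subset hΩ hbdd isOpen_empty (empty_subset _) hf fun x hx => hf₀ x hx.1).trans
    (D.deg_empty f)

end Axioms

/-- The degree on the disc `ball c R` of a map of the complex plane, which is identified with
`ℝ²` through `e`. -/
def discDeg (D : DegreeTheory 2) (e : ℂ ≃ₗᵢ[ℝ] Euc 2) (f : ℂ → ℂ) (c : ℂ) (R : ℝ) : ℤ :=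
  D.deg (fun x => e (f (e.symm x))) (ball (e c) R)

section Disc

variable (D : DegreeTheory 2) (e : ℂ ≃ₗᵢ[ℝ] Euc 2) {f g : ℂ → ℂ} {c : ℂ} {R : ℝ}

theorem mapsTo_symm_closure_ball :
    MapsTo e.symm (closure (ball (e c) R)) (closedBall c R) := fun x hx => by
  rw [← e.symm_apply_apply c, mem_closedBall, e.symm.dist_map]
  exact closure_ball_subset_closedBall hx

theorem discDeg_homotopy {h : ℝ → ℂ → ℂ} (hR : 0 < R)
    (hh : ContinuousOn (fun p : ℝ × ℂ => h p.1 p.2) (Icc 0 1 ×ˢ closedBall c R))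
    (hh₀ : ∀ t ∈ Icc (0 : ℝ) 1, ∀ z ∈ sphere c R, h t z ≠ 0) :
    D.discDeg e (h 0) c R = D.discDeg e (h 1) c R := by
  refine D.homotopyInv (fun t x => e (h t (e.symm x))) _ isOpen_ball isBounded_ball ?_ ?_
  · exact e.continuous.comp_continuousOn (hh.comp (f := fun p : ℝ × Euc 2 => (p.1, e.symm p.2))
      (by fun_prop) fun p hp => ⟨hp.1, mapsTo_symm_closure_ball e hp.2⟩)
  · intro t ht x hx
    rw [frontier_ball _ hR.ne', ← e.symm_symm, ← e.symm.preimage_sphere] at hx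
    exact (map_ne_zero_iff e e.injective).2 (hh₀ t ht _ hx)

theorem discDeg_add {c₁ c₂ : ℂ} {r₁ r₂ : ℝ} (hf : ContinuousOn f (closedBall c R))
    (hsub₁ : ball c₁ r₁ ⊆ ball c R) (hsub₂ : ball c₂ r₂ ⊆ ball c R)
    (hdisj : Disjoint (ball c₁ r₁) (ball c₂ r₂))
    (hf₀ : ∀ z ∈ closedBall c R, z ∉ ball c₁ r₁ ∪ ball c₂ r₂ → f z ≠ 0) :
    D.discDeg e f c R = D.discDeg e f c₁ r₁ + D.discDeg e f c₂ r₂ := by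
  have hball : ∀ a r, ball (e a) r = e.symm ⁻¹' ball a r := fun a r => by
    rw [e.symm.preimage_ball, e.symm_symm]
  refine D.additive _ _ _ _ isOpen_ball isBounded_ball isOpen_ball isOpen_ball ?_ ?_ ?_ ?_ ?_
  · exact hball c₁ r₁ ▸ hball c R ▸ preimage_mono hsub₁
  · exact hball c₂ r₂ ▸ hball c R ▸ preimage_mono hsub₂
  · exact hball c₁ r₁ ▸ hball c₂ r₂ ▸ hdisj.preimage _
  · exact e.continuous.comp_continuousOn (hf.comp e.symm.continuous.continuousOn
      (mapsTo_symm_closure_ball e))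
  · rintro x ⟨hx, hx'⟩
    rw [hball, hball, ← preimage_union] at hx'
    exact (map_ne_zero_iff e e.injective).2 (hf₀ _ (mapsTo_symm_closure_ball e hx) hx')

theorem discDeg_eq_zero (hf : ContinuousOn f (closedBall c R))
    (hf₀ : ∀ z ∈ closedBall c R, f z ≠ 0) : D.discDeg e f c R = 0 :=
  D.deg_eq_zero isOpen_ball isBounded_ball
    (e.continuous.comp_continuousOn (hf.comp e.symm.continuous.continuousOn
      (mapsTo_symm_closure_ball e)))
    fun _ hx => (map_ne_zero_iff e e.injective).2 (hf₀ _ (mapsTo_symm_closure_ball e hx))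

theorem discDeg_eq_of_ball_subset {c₁ : ℂ} {r₁ : ℝ} (hf : ContinuousOn f (closedBall c R))
    (hsub : ball c₁ r₁ ⊆ ball c R) (hf₀ : ∀ z ∈ closedBall c R, z ∉ ball c₁ r₁ → f z ≠ 0) :
    D.discDeg e f c R = D.discDeg e f c₁ r₁ := by
  rw [D.discDeg_add e (c₂ := c) (r₂ := 0) hf hsub (by simp) (by simp) (by simpa using hf₀),
    add_eq_left]
  simp [discDeg, D.deg_empty]

theorem discDeg_id (hR : 0 < R) : D.discDeg e id 0 R = 1 := by
  have hid : (fun x => e (id (e.symm x))) = id := funext e.apply_symm_apply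
  rw [discDeg, hid]
  exact D.normalized _ isOpen_ball isBounded_ball (by simpa using hR)

theorem discDeg_congr (hR : 0 < R) (hf : ContinuousOn f (closedBall c R))
    (hg : ContinuousOn g (closedBall c R)) (hfg : EqOn f g (sphere c R))
    (hf₀ : ∀ z ∈ sphere c R, f z ≠ 0) : D.discDeg e f c R = D.discDeg e g c R := by
  have hsnd : MapsTo Prod.snd (Icc (0 : ℝ) 1 ×ˢ closedBall c R) (closedBall c R) := fun _ hp => hp.2
  have := D.discDeg_homotopy e (h := fun t z => f z + t * (g z - f z)) hR
    (by
      have := hf.comp continuousOn_snd hsnd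
      have := hg.comp continuousOn_snd hsnd
      fun_prop)
    fun t _ z hz => by simpa [hfg hz] using hf₀ z hz
  simpa using this

theorem discDeg_mul_of_ne_zero (hR : 0 < R) (hf : ContinuousOn f (closedBall c R))
    (hf₀ : ∀ z ∈ sphere c R, f z ≠ 0) (hg : ContinuousOn g (closedBall c R))
    (hg₀ : ∀ z ∈ closedBall c R, g z ≠ 0) : D.discDeg e (f * g) c R = D.discDeg e f c R := by
  have hc : c ∈ closedBall c R := mem_closedBall_self hR.le
  obtain ⟨ζ, hζ, -, hζg⟩ := exists_continuousOn_exp_eq (convex_closedBall c R) hg hg₀ hc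
    (Complex.exp_log (hg₀ c hc))
  have hsnd : MapsTo Prod.snd (Icc (0 : ℝ) 1 ×ˢ closedBall c R) (closedBall c R) := fun _ hp => hp.2
  have hfζ := D.discDeg_homotopy e (h := fun t z => f z * Complex.exp (t * ζ z)) hR
    (by
      have := hf.comp continuousOn_snd hsnd
      have := hζ.comp continuousOn_snd hsnd
      fun_prop)
    fun t _ z hz => mul_ne_zero (hf₀ z hz) (Complex.exp_ne_zero _)
  have hfg := D.discDeg_congr e hR (hf.mul hg) (hf.mul hζ.cexp)
    (fun z hz => by simp [hζg z (sphere_subset_closedBall hz)])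
    (fun z hz => mul_ne_zero (hf₀ z hz) (hg₀ z (sphere_subset_closedBall hz)))
  rw [hfg]
  simpa only [Complex.ofReal_zero, Complex.ofReal_one, zero_mul, one_mul, Complex.exp_zero, mul_one,
    Pi.mul_def] using hfζ.symm

theorem discDeg_mul_comp_sub (hf : Continuous f) (hg : Continuous g) (hf₀ : ∀ z ≠ 0, f z ≠ 0)
    (hg₀ : ∀ z ≠ 0, g z ≠ 0) {a : ℂ} (ha : ‖a‖ < R) :
    D.discDeg e (fun z => f z * g (z - a)) 0 R = D.discDeg e (f * g) 0 R := by
  have hR : 0 < R := (norm_nonneg a).trans_lt ha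
  have := D.discDeg_homotopy e (h := fun t z => f z * g (z - t * a)) (c := 0) hR
    (by fun_prop) fun t ht z hz => by
      rw [mem_sphere_zero_iff_norm] at hz
      refine mul_ne_zero (hf₀ z (norm_pos_iff.1 (hz ▸ hR))) (hg₀ _ (sub_ne_zero.2 ?_))
      rintro rfl
      rw [norm_mul, Complex.norm_real, Real.norm_of_nonneg ht.1] at hz
      nlinarith [ht.2, norm_nonneg a]
  simpa only [Complex.ofReal_zero, Complex.ofReal_one, zero_mul, one_mul, sub_zero, Pi.mul_def]
    using this.symm

/-- Sliding the zero of `g` away from that of `f` separates their contributions. -/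
theorem discDeg_mul (hR : 0 < R) (hf : Continuous f) (hg : Continuous g) (hf₀ : ∀ z ≠ 0, f z ≠ 0)
    (hg₀ : ∀ z ≠ 0, g z ≠ 0) :
    D.discDeg e (f * g) 0 R = D.discDeg e f 0 R + D.discDeg e g 0 R := by
  set a : ℂ := ((R / 2 : ℝ) : ℂ)
  have ha : ‖a‖ = R / 2 := by rw [Complex.norm_real, Real.norm_of_nonneg (by positivity)]
  set r : ℝ := R / 4 with hr_eq
  have hr : 0 < r := by positivity
  have hgₐ : ∀ z ≠ a, g (z - a) ≠ 0 := fun z hz => hg₀ _ (sub_ne_zero.2 hz)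
  have hgₐc : Continuous fun z => g (z - a) := by fun_prop
  have ha_notMem : a ∉ closedBall (0 : ℂ) r := by
    rw [mem_closedBall_zero_iff, ha]; linarith
  have h0_notMem : (0 : ℂ) ∉ closedBall a r := by
    rw [mem_closedBall, dist_zero_left, ha]; linarith
  have hsub₀ : ball (0 : ℂ) r ⊆ ball 0 R := ball_subset_ball (by linarith)
  have hsubₐ : ball a r ⊆ ball 0 R := ball_subset_ball' (by rw [dist_zero_right, ha]; linarith)
  have hne_sphere : ∀ b : ℂ, ∀ z ∈ sphere b r, z ≠ b := fun b z hz => ne_of_mem_sphere hz hr.ne'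
  calc D.discDeg e (f * g) 0 R = D.discDeg e (fun z => f z * g (z - a)) 0 R :=
        (D.discDeg_mul_comp_sub e hf hg hf₀ hg₀ (by linarith)).symm
    _ = D.discDeg e (fun z => f z * g (z - a)) 0 r +
          D.discDeg e (fun z => f z * g (z - a)) a r := by
        refine D.discDeg_add e (hf.mul hgₐc).continuousOn hsub₀ hsubₐ
          (ball_disjoint_ball (by rw [dist_zero_left, ha]; linarith)) fun z _ hz => ?_
        refine mul_ne_zero (hf₀ z ?_) (hgₐ z ?_) <;> rintro rfl
        exacts [hz (.inl (mem_ball_self hr)), hz (.inr (mem_ball_self hr))]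
    _ = D.discDeg e f 0 r + D.discDeg e (fun z => g (z - a)) a r := by
        congr 1
        · exact D.discDeg_mul_of_ne_zero e hr hf.continuousOn
            (fun z hz => hf₀ z (hne_sphere 0 z hz))
            hgₐc.continuousOn fun z hz => hgₐ z (ne_of_mem_of_not_mem hz ha_notMem)
        · rw [← D.discDeg_mul_of_ne_zero e hr hgₐc.continuousOn
            (fun z hz => hgₐ z (hne_sphere a z hz)) hf.continuousOn
            fun z hz => hf₀ z (ne_of_mem_of_not_mem hz h0_notMem), mul_comm]
          rfl
    _ = D.discDeg e f 0 R + D.discDeg e (fun z => g (z - a)) 0 R := by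
        rw [D.discDeg_eq_of_ball_subset e hf.continuousOn hsub₀ fun z _ hz => hf₀ z ?_,
          D.discDeg_eq_of_ball_subset e hgₐc.continuousOn hsubₐ fun z _ hz => hgₐ z ?_] <;>
        rintro rfl <;> exact hz (mem_ball_self hr)
    _ = D.discDeg e f 0 R + D.discDeg e g 0 R := by
        congr 1
        simpa using D.discDeg_mul_comp_sub e (f := 1) continuous_one hg (by simp) hg₀
          (ha.trans_lt (by linarith))

theorem discDeg_one : D.discDeg e 1 c R = 0 :=
  D.discDeg_eq_zero e continuousOn_const fun _ _ => one_ne_zero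

theorem discDeg_pow (hR : 0 < R) (hf : Continuous f) (hf₀ : ∀ z ≠ 0, f z ≠ 0) (m : ℕ) :
    D.discDeg e (f ^ m) 0 R = m * D.discDeg e f 0 R := by
  induction m with
  | zero => simp [discDeg_one]
  | succ m ih =>
    rw [pow_succ, D.discDeg_mul e hR (hf.pow m) hf (fun z hz => pow_ne_zero m (hf₀ z hz)) hf₀, ih]
    push_cast
    ring

theorem discDeg_star (hR : 0 < R) : D.discDeg e star 0 R = -1 := by
  have hnormSq : D.discDeg e (id * star) 0 R = 0 := by
    rw [← D.discDeg_eq_zero e (f := fun _ => (R : ℂ) ^ 2) (c := 0) (R := R) continuousOn_const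
      fun _ _ => by exact_mod_cast (pow_pos hR 2).ne']
    refine D.discDeg_congr e hR (continuous_id.mul continuous_star).continuousOn continuousOn_const
      (fun z hz => ?_) fun z hz => ?_
    · rw [mem_sphere_zero_iff_norm] at hz
      simpa [hz] using Complex.mul_conj' z
    · simpa using ne_of_mem_sphere hz hR.ne'
  rw [D.discDeg_mul e hR continuous_id continuous_star (fun z hz => hz) (by simp),
    D.discDeg_id e hR] at hnormSq
  linarith

theorem discDeg_id_pow_mul_star_pow (hR : 0 < R) (i j : ℕ) :
    D.discDeg e (id ^ i * star ^ j) 0 R = i - j := by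
  have hstar₀ : ∀ z : ℂ, z ≠ 0 → star z ≠ 0 := fun z => star_ne_zero.2
  rw [D.discDeg_mul e hR (continuous_id.pow i) (continuous_star.pow j)
      (fun z hz => pow_ne_zero i hz) (fun z hz => pow_ne_zero j (hstar₀ z hz)),
    D.discDeg_pow e hR continuous_id (fun z hz => hz), D.discDeg_id e hR,
    D.discDeg_pow e hR continuous_star hstar₀, D.discDeg_star e hR]
  ring

theorem discDeg_eq_of_eq_zpow_mul_exp (hR : 0 < R) (hf : ContinuousOn f (closedBall 0 R)) {k : ℤ}
    {η : ℂ → ℂ} (hη : ContinuousOn η (closedBall 0 R))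
    (hfη : ∀ z ∈ sphere (0 : ℂ) R, f z = z ^ k * Complex.exp (η z)) :
    D.discDeg e f 0 R = k := by
  have hR₀ : (R : ℂ) ≠ 0 := by exact_mod_cast hR.ne'
  have hne : ∀ z ∈ sphere (0 : ℂ) R, z ≠ 0 := fun z hz => ne_of_mem_sphere hz hR.ne'
  set i := k.toNat
  set j := (-k).toNat
  have hij : (i : ℤ) - j = k := Int.toNat_sub_toNat_neg k
  let m : ℂ → ℂ := id ^ i * star ^ j
  have hm : Continuous m := (continuous_id.pow i).mul (continuous_star.pow j)
  have hm₀ : ∀ z ≠ 0, m z ≠ 0 := fun z hz =>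
    mul_ne_zero (pow_ne_zero i hz) (pow_ne_zero j (star_ne_zero.2 hz))
  have hfm : EqOn f (m * fun z => ((R : ℂ) ^ 2)⁻¹ ^ j * Complex.exp (η z)) (sphere 0 R) := by
    intro z hz
    have hz₀ := hne z hz
    have hinv : z⁻¹ = star z * ((R : ℂ) ^ 2)⁻¹ := by
      rw [← mem_sphere_zero_iff_norm.1 hz, ← Complex.mul_conj', ← Complex.star_def, mul_inv_rev,
        mul_inv_cancel_left₀ (star_ne_zero.2 hz₀)]
    have hzpow : z ^ k = z ^ i * z⁻¹ ^ j := by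
      rw [← hij, zpow_sub₀ hz₀, zpow_natCast, zpow_natCast, inv_pow, div_eq_mul_inv]
    rw [hfη z hz, hzpow, hinv]
    simp only [m, Pi.mul_apply, Pi.pow_apply, id]
    ring
  rw [D.discDeg_congr e hR hf (by fun_prop) hfm fun z hz => ?_,
    D.discDeg_mul_of_ne_zero e hR hm.continuousOn (fun z hz => hm₀ z (hne z hz)) (by fun_prop)
      fun z _ => mul_ne_zero (by positivity) (Complex.exp_ne_zero _),
    D.discDeg_id_pow_mul_star_pow e hR, hij]
  rw [hfη z hz]
  exact mul_ne_zero (zpow_ne_zero k (hne z hz)) (Complex.exp_ne_zero _)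

end Disc

end DegreeTheory

/-! ### Proper gradient maps of degree zero -/

section DegreeZero

theorem HasDeg.of_forall_ne_zero {n : ℕ} (D : DegreeTheory n) {f : Euc n → Euc n}
    (hf : Continuous f) (hf₀ : ∀ x, f x ≠ 0) : HasDeg D f 0 := fun _ _ _ =>
  D.deg_eq_zero isOpen_ball isBounded_ball hf.continuousOn fun x _ => hf₀ x

theorem exists_isGradient_isProper_hasDeg_zero {n : ℕ} (D : DegreeTheory n) {v : Euc n}
    (hv : ‖v‖ = 1) : ∃ f : Euc n → Euc n, IsGradient f ∧ IsProper f ∧ HasDeg D f 0 := by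
  obtain ⟨g, -, hgrad, hgv⟩ := exists_dilation_family (Z := fun _ => v) contDiff_const (M := 1)
    (fun _ => hv.le) (τ := innerSL ℝ v) (innerSL ℝ v).contDiff
    fun x => by rw [ContinuousLinearMap.fderiv, innerSL_apply_apply, real_inner_self_eq_norm_sq, hv,
      one_pow]
  have hlarge : ∀ x, 1 + ‖x‖ ^ 2 ≤ ‖g 1 x‖ := fun x =>
    le_norm_of_mul_norm_le_inner (norm_pos_iff.1 (hv ▸ one_pos)) (by rw [hgv, hv, mul_one])
  refine ⟨g 1, hgrad 1, .of_eventually_le_norm (hgrad 1).continuous fun C => ?_,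
    .of_forall_ne_zero D (hgrad 1).continuous fun x => ?_⟩
  · filter_upwards [(tendsto_norm_cocompact_atTop (E := Euc n)).eventually_ge_atTop C] with x hx
    nlinarith [hlarge x, sq_nonneg (‖x‖ - 1)]
  · exact norm_pos_iff.1 ((by positivity : 0 < 1 + ‖x‖ ^ 2).trans_le (hlarge x))

variable {D : DegreeTheory 2} {f : Euc 2 → Euc 2}

theorem HasDeg.exists_eventually_eq_exp (hdeg : HasDeg D f 0) (hf : Continuous f)
    (hproper : IsProper f) (e : ℂ ≃ₗᵢ[ℝ] Euc 2) :
    ∃ η : ℂ → ℂ, Continuous η ∧ ∀ᶠ z in cocompact ℂ, e.symm (f (e z)) = Complex.exp (η z) := by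
  obtain ⟨L, hL, hLf⟩ := mem_cocompact.1 (hproper.eventually_le_norm 1)
  obtain ⟨R, hR, hLR⟩ := hL.isBounded.exists_pos_norm_lt
  have hf₀ : ∀ x, R ≤ ‖x‖ → f x ≠ 0 := fun x hx => by
    have : 1 ≤ ‖f x‖ := hLf fun hxL => (hLR x hxL).not_ge hx
    exact norm_pos_iff.1 (one_pos.trans_le this)
  set F : ℂ → ℂ := fun z => e.symm (f (e z))
  have hF : Continuous F := e.symm.continuous.comp (hf.comp e.continuous)
  obtain ⟨k, η, hη, hFη⟩ := exists_eq_zpow_mul_exp_of_le_norm hR hF.continuousOn fun z hz =>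
    (map_ne_zero_iff e.symm e.symm.injective).2 (hf₀ (e z) (by rwa [e.norm_map]))
  have hk : k = 0 := calc
    k = D.discDeg e F 0 R := (D.discDeg_eq_of_eq_zpow_mul_exp e hR hF.continuousOn hη.continuousOn
      fun z hz => hFη z (mem_sphere_zero_iff_norm.1 hz).ge).symm
    _ = D.deg f (ball 0 R) := by simp [DegreeTheory.discDeg, F]
    _ = 0 := hdeg R hR fun x hx => mem_ball_zero_iff.2 (not_le.1 fun hxR => hf₀ x hxR hx)
  refine ⟨η, hη, ?_⟩
  filter_upwards [(tendsto_norm_cocompact_atTop (E := ℂ)).eventually_ge_atTop R] with z hz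
  simpa [hk] using hFη z hz

theorem HasDeg.exists_properGradientHomotopic_isCoerciveAlong_const (hdeg : HasDeg D f 0)
    (hf : IsGradient f) (hproper : IsProper f) (e : ℂ ≃ₗᵢ[ℝ] Euc 2) :
    ∃ g, IsGradient g ∧ ProperGradientHomotopic f g ∧ IsCoerciveAlong g fun _ => e 1 := by
  obtain ⟨η, hη, hfη⟩ := hdeg.exists_eventually_eq_exp hf.continuous hproper e
  obtain ⟨Z, hZ, hZ₁, hZe, hfZ⟩ := exists_unitField_isCoerciveAlong hproper e hη hfη
  have htransient : ∀ p, IsTransient Z p := isTransient_of_forall_ne_zero hZ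
    (fun x => norm_pos_iff.1 (hZ₁ x ▸ one_pos)) fun x => (hZ₁ x).le
  exact hZe ▸ _root_.exists_properGradientHomotopic_isCoerciveAlong_const hf hZ hZ₁ htransient hfZ

end DegreeZero

/-- the set of proper gradient homotopy classes of proper gradient maps of
Brouwer degree `0` on `ℝ²` is a singleton: such a map exists and any two proper gradient
maps of degree `0` are proper gradient homotopic. -/
theorem proper_gradient_deg_zero_singleton (D : DegreeTheory 2) :
    (∃ f : Euc 2 → Euc 2, IsGradient f ∧ IsProper f ∧ HasDeg D f 0) ∧
    (∀ f g : Euc 2 → Euc 2,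
      IsGradient f → IsProper f → HasDeg D f 0 →
      IsGradient g → IsProper g → HasDeg D g 0 →
      ProperGradientHomotopic f g) := by
  obtain ⟨e⟩ : Nonempty (ℂ ≃ₗᵢ[ℝ] Euc 2) := ⟨Complex.orthonormalBasisOneI.repr⟩
  have he : ‖e 1‖ = 1 := by simp
  refine ⟨exists_isGradient_isProper_hasDeg_zero D he,
    fun f g hf hfproper hfdeg hg hgproper hgdeg => ?_⟩
  obtain ⟨f', hf', hff', hf'e⟩ :=
    hfdeg.exists_properGradientHomotopic_isCoerciveAlong_const hf hfproper e
  obtain ⟨g', hg', hgg', hg'e⟩ :=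
    hgdeg.exists_properGradientHomotopic_isCoerciveAlong_const hg hgproper e
  have hf'g' : ProperGradientHomotopic f' g' :=
    .of_isCoerciveAlong hf' hg' (fun _ => norm_pos_iff.1 (he ▸ one_pos)) hf'e hg'e
  exact (hff'.trans hf'g').trans hgg'.symm
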